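/- arXiv:1701.02168 — 2 statements merged into one kernel-verified Lean document; each statement's English description precedes it below -/
import Mathlib

section
/- There is a polynomial p such that for every n > 0 there exists a Streett automaton with costs A_n of size at most p(n), over the alphabet Σ_I × Σ_O with Σ_I = {0,1} ∪ {0,1}×{#} and Σ_O = {0,1} ∪ {0,1}×{◄,►}, such that: (i) there is a delay function f and a winning strategy τ_O for Player O in Γ_f(L(A_n)) with Cst(τ_O) = n; and (ii) for every delay function f, if Player O has a winning strategy τ_O for Γ_f(L(A_n)) with Cst(τ_O) = n, then f eventually grants a lookahead of size n·(2^{2^n} − 1). -/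
attribute [local instance] Classical.propDecidable

noncomputable section

/-- A Streett automaton with costs: states `Q`, alphabet `A`, index set `J` of Streett pairs
`(req j, res j)`, and one cost function `Cst j` per pair (`true` = increment). -/
structure StreettCost (Q A J : Type) where
  qI : Q
  δ : Q → A → Q
  req : J → Set Q
  res : J → Set Q
  Cst : J → Q → A → Bool

namespace StreettCost

variable {Q A J : Type}

/-- The state reached after processing the first `n` letters of `w` starting in `q0`. -/
def stateAt (M : StreettCost Q A J) (q0 : Q) (w : ℕ → A) : ℕ → Q
  | 0 => q0
  | n + 1 => M.δ (stateAt M q0 w n) (w n)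

/-- The number of `Cst j`-increment-transitions between positions `m` and `n`. -/
def segCost (M : StreettCost Q A J) (j : J) (q0 : Q) (w : ℕ → A) (m n : ℕ) : ℕ :=
  ((Finset.Ico m n).filter fun i => M.Cst j (stateAt M q0 w i) (w i) = true).card

/-- The cost-of-response of pair `j` at position `n`. -/
def StCorJ (M : StreettCost Q A J) (j : J) (q0 : Q) (w : ℕ → A) (n : ℕ) : ℕ∞ :=
  if stateAt M q0 w n ∈ M.req j then
    sInf { c : ℕ∞ | ∃ n', n ≤ n' ∧ stateAt M q0 w n' ∈ M.res j ∧
      c = (segCost M j q0 w n n' : ℕ∞) }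
  else 0

/-- The aggregated cost-of-response at position `n`. -/
def StCor (M : StreettCost Q A J) (q0 : Q) (w : ℕ → A) (n : ℕ) : ℕ∞ :=
  ⨆ j : J, StCorJ M j q0 w n

/-- The run of `M` on `w` starting in `q0` satisfies the Streett condition with costs. -/
def Accepting (M : StreettCost Q A J) (q0 : Q) (w : ℕ → A) : Prop :=
  Filter.limsup (fun n => StCor M q0 w n) Filter.atTop < ⊤

/-- The language of `M`. -/
def Lang (M : StreettCost Q A J) : Set (ℕ → A) := { w | Accepting M M.qI w }

end StreettCost

section DelayGames

variable {I O : Type}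

/-- The `n`-th letter of the concatenation `u 0 ++ u 1 ++ u 2 ++ ⋯`
(well-defined whenever all blocks are non-empty). -/
def flatWord [Inhabited I] (u : ℕ → List I) (n : ℕ) : I :=
  (((List.range (n + 1)).map u).flatten).getD n default

/-- A delay function maps every round to a positive number of letters. -/
def DelayFn (f : ℕ → ℕ) : Prop := ∀ i, 0 < f i

/-- The constant delay function `f_k` with `f_k 0 = k + 1` and `f_k i = 1` for `i > 0`. -/
def constDF (k : ℕ) : ℕ → ℕ := fun i => if i = 0 then k + 1 else 1

/-- The sequence of letters Player I has produced up to (and including) round `i`. -/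
def oHist (u : ℕ → List I) (i : ℕ) : List I := ((List.range (i + 1)).map u).flatten

/-- `τO` is a winning strategy for Player O in the delay game with delay function `f`
and winning condition `L`. -/
def OWinning [Inhabited I] (f : ℕ → ℕ) (L : Set (ℕ → I × O)) (τO : List I → O) : Prop :=
  ∀ u : ℕ → List I, ∀ v : ℕ → O,
    (∀ i, (u i).length = f i) →
    (∀ i, v i = τO (oHist u i)) →
    (fun n => (flatWord u n, v n)) ∈ L

/-- Player O wins the delay game `Γ_f(L)`. -/
def OWins [Inhabited I] (f : ℕ → ℕ) (L : Set (ℕ → I × O)) : Prop :=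
  ∃ τO : List I → O, OWinning f L τO

/-- `τI` is a winning strategy for Player I in the delay game with delay function `f`
and winning condition `L`. -/
def IWinning [Inhabited I] (f : ℕ → ℕ) (L : Set (ℕ → I × O)) (τI : List O → List I) : Prop :=
  (∀ w, (τI w).length = f w.length) ∧
  ∀ u : ℕ → List I, ∀ v : ℕ → O,
    (∀ i, u i = τI ((List.range i).map v)) →
    (fun n => (flatWord u n, v n)) ∉ L

/-- Player I wins the delay game `Γ_f(L)`. -/
def IWins [Inhabited I] (f : ℕ → ℕ) (L : Set (ℕ → I × O)) : Prop :=
  ∃ τI : List O → List I, IWinning f L τI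

/-- The cost of a strategy `τO` of Player O: the supremum of the word-costs `wc` of the
outcomes of plays consistent with `τO`. -/
def stratCost [Inhabited I] (wc : (ℕ → I × O) → ℕ∞) (f : ℕ → ℕ) (τO : List I → O) : ℕ∞ :=
  ⨆ (u : ℕ → List I) (v : ℕ → O)
    (_ : (∀ i, (u i).length = f i) ∧ ∀ i, v i = τO (oHist u i)),
    wc (fun n => (flatWord u n, v n))

/-- An optimal winning strategy for Player O in `Γ_f(L)` exists and has cost `c`. -/
def OptimalCostIs [Inhabited I] (L : Set (ℕ → I × O)) (wc : (ℕ → I × O) → ℕ∞)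
    (f : ℕ → ℕ) (c : ℕ∞) : Prop :=
  (∃ τO, OWinning f L τO ∧ stratCost wc f τO = c) ∧
  ∀ τO, OWinning f L τO → c ≤ stratCost wc f τO

end DelayGames

/-- The cost `limsup_n StCor(ρ(w), n)` of the run of `M` on an infinite word `w`. -/
def StreettCost.wCost {Q I O J : Type} (M : StreettCost Q (I × O) J) : (ℕ → I × O) → ℕ∞ :=
  fun w => Filter.limsup (fun n => StreettCost.StCor M M.qI w n) Filter.atTop


/-! ### Transport along a homomorphism -/

theorem stateAt_hom {Q1 Q2 A J1 J2 : Type} (M1 : StreettCost Q1 A J1) (M2 : StreettCost Q2 A J2)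
    (h : Q1 → Q2) (hδ : ∀ q a, h (M1.δ q a) = M2.δ (h q) a) (q : Q1) (w : ℕ → A) (t : ℕ) :
    h (M1.stateAt q w t) = M2.stateAt (h q) w t := by
  induction t with
  | zero => rfl
  | succ t ih => simp only [StreettCost.stateAt, hδ, ih]

theorem StCor_hom {Q1 Q2 A J1 J2 : Type} (M1 : StreettCost Q1 A J1) (M2 : StreettCost Q2 A J2)
    (h : Q1 → Q2) (e : J1 ≃ J2) (hδ : ∀ q a, h (M1.δ q a) = M2.δ (h q) a)
    (hreq : ∀ j q, q ∈ M1.req j ↔ h q ∈ M2.req (e j))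
    (hres : ∀ j q, q ∈ M1.res j ↔ h q ∈ M2.res (e j))
    (hC : ∀ j q a, M1.Cst j q a = M2.Cst (e j) (h q) a)
    (q : Q1) (w : ℕ → A) (t : ℕ) :
    M1.StCor q w t = M2.StCor (h q) w t := by
  have hs := stateAt_hom M1 M2 h hδ q w
  have hseg : ∀ j m k, M1.segCost j q w m k = M2.segCost (e j) (h q) w m k := by
    intro j m k
    simp only [StreettCost.segCost, hC, hs]
  unfold StreettCost.StCor
  rw [← e.iSup_comp]
  refine iSup_congr fun j => ?_
  simp only [StreettCost.StCorJ, hreq, hres, hs, hseg]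

theorem StCor_le' {Q A J : Type} (M : StreettCost Q A J) (q : Q) (w : ℕ → A) (t c : ℕ)
    (h : ∀ j, M.stateAt q w t ∈ M.req j → ∃ t', t ≤ t' ∧ M.stateAt q w t' ∈ M.res j ∧
      M.segCost j q w t t' ≤ c) : M.StCor q w t ≤ (c : ℕ∞) := by
  refine iSup_le fun j => ?_
  unfold StreettCost.StCorJ
  split_ifs with hq
  · obtain ⟨t', h1, h2, h3⟩ := h j hq
    exact le_trans (sInf_le ⟨t', h1, h2, rfl⟩) (by exact_mod_cast h3)
  · simp

theorem le_StCor' {Q A J : Type} (M : StreettCost Q A J) (q : Q) (w : ℕ → A) (t c : ℕ) (j : J)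
    (hq : M.stateAt q w t ∈ M.req j)
    (h : ∀ t', t ≤ t' → M.stateAt q w t' ∈ M.res j → c ≤ M.segCost j q w t t') :
    (c : ℕ∞) ≤ M.StCor q w t := by
  refine le_trans ?_ (le_iSup _ j)
  unfold StreettCost.StCorJ
  rw [if_pos hq]
  refine le_sInf ?_
  rintro x ⟨t', h1, h2, rfl⟩
  exact_mod_cast h t' h1 h2

theorem segCost_split {Q A J : Type} (M : StreettCost Q A J) (q : Q) (w : ℕ → A) (j : J)
    {a b c : ℕ} (hab : a ≤ b) (hbc : b ≤ c) :
    M.segCost j q w a c = M.segCost j q w a b + M.segCost j q w b c := by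
  unfold StreettCost.segCost
  rw [← Finset.Ico_union_Ico_eq_Ico hab hbc, Finset.filter_union, Finset.card_union_of_disjoint]
  exact Finset.disjoint_filter_filter (Finset.Ico_disjoint_Ico_consecutive a b c)

theorem segCost_succ {Q A J : Type} (M : StreettCost Q A J) (q : Q) (w : ℕ → A) (j : J) (a : ℕ) :
    M.segCost j q w a (a + 1) = (M.Cst j (M.stateAt q w a) (w a)).toNat := by
  unfold StreettCost.segCost
  rw [Nat.Ico_succ_singleton, Finset.filter_singleton]
  cases M.Cst j (M.stateAt q w a) (w a) <;> simp

theorem segCost_self {Q A J : Type} (M : StreettCost Q A J) (q : Q) (w : ℕ → A) (j : J) (a : ℕ) :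
    M.segCost j q w a a = 0 := by
  unfold StreettCost.segCost; simp

/-! ### Plays -/

theorem oHist_succ {I : Type} (u : ℕ → List I) (t : ℕ) :
    oHist u (t + 1) = oHist u t ++ u (t + 1) := by
  unfold oHist
  rw [List.range_succ (n := t + 1)]
  simp

theorem oHist_length {I : Type} (u : ℕ → List I) (f : ℕ → ℕ) (h : ∀ i, (u i).length = f i)
    (t : ℕ) : (oHist u t).length = ∑ i ∈ Finset.range (t + 1), f i := by
  induction t with
  | zero => simp [oHist, h]
  | succ t ih => rw [oHist_succ, List.length_append, ih, h, Finset.sum_range_succ _ (t + 1)]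

theorem oHist_prefix {I : Type} (u : ℕ → List I) {s t : ℕ} (h : s ≤ t) :
    oHist u s <+: oHist u t := by
  induction t, h using Nat.le_induction with
  | base => exact List.prefix_rfl
  | succ t _ ih => rw [oHist_succ]; exact ih.trans (List.prefix_append _ _)

theorem le_sum_delay (f : ℕ → ℕ) (hf : DelayFn f) (t : ℕ) :
    t ≤ ∑ i ∈ Finset.range t, f i := by
  calc t = ∑ i ∈ Finset.range t, 1 := by simp
    _ ≤ _ := Finset.sum_le_sum fun i _ => hf i

theorem oHist_getD {I : Type} [Inhabited I] (u : ℕ → List I) (f : ℕ → ℕ) (hf : DelayFn f)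
    (h : ∀ i, (u i).length = f i) (t m : ℕ) (hm : m < ∑ i ∈ Finset.range (t + 1), f i) :
    (oHist u t).getD m default = flatWord u m := by
  have h1 : m < (oHist u t).length := by rw [oHist_length u f h]; exact hm
  have h2 : m < (oHist u m).length := by
    rw [oHist_length u f h]; exact le_sum_delay f hf (m + 1)
  show _ = (oHist u m).getD m default
  rw [List.getD_eq_getElem _ _ h1, List.getD_eq_getElem _ _ h2]
  rcases le_total t m with htm | htm
  · exact List.IsPrefix.getElem (oHist_prefix u htm) h1
  · exact (List.IsPrefix.getElem (oHist_prefix u htm) h2).symm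

/-- blocks cut out of an infinite word -/
def cut {I : Type} (α : ℕ → I) (f : ℕ → ℕ) (i : ℕ) : List I :=
  (List.range (f i)).map fun r => α ((∑ k ∈ Finset.range i, f k) + r)

theorem cut_oHist {I : Type} (α : ℕ → I) (f : ℕ → ℕ) (t : ℕ) :
    oHist (cut α f) t = (List.range (∑ k ∈ Finset.range (t + 1), f k)).map α := by
  induction t with
  | zero => simp [oHist, cut]
  | succ t ih =>
    rw [oHist_succ, ih, Finset.sum_range_succ _ (t + 1), List.range_add, List.map_append, cut,
      List.map_map]
    rfl

theorem cut_flatWord {I : Type} [Inhabited I] (α : ℕ → I) (f : ℕ → ℕ) (hf : DelayFn f) (m : ℕ) :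
    flatWord (cut α f) m = α m := by
  show (oHist (cut α f) m).getD m default = _
  rw [cut_oHist]
  have : m < ∑ k ∈ Finset.range (m + 1), f k := le_sum_delay f hf (m + 1)
  rw [List.getD_eq_getElem _ _ (by simpa using this)]
  simp

theorem exists_causal {I : Type} [Inhabited I] (H : ℕ → (ℕ → I) → I)
    (hH : ∀ l a a', (∀ m, m < l → a m = a' m) → H l a = H l a') :
    ∃ a, ∀ l, a l = H l a := by
  let pre : ℕ → (ℕ → I) := fun l => Nat.rec (fun _ => default)
    (fun k p => fun m => if m < k then p m else H k p) l
  have hpre : ∀ k m, pre (k + 1) m = if m < k then pre k m else H k (pre k) := fun _ _ => rfl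
  have hst : ∀ k m, m < k → pre k m = pre (m + 1) m := by
    intro k m hk
    induction k with
    | zero => omega
    | succ k ih =>
      rcases Nat.lt_or_ge m k with h | h
      · rw [hpre, if_pos h, ih h]
      · have : m = k := by omega
        rw [this]
  refine ⟨fun m => pre (m + 1) m, fun l => ?_⟩
  show pre (l + 1) l = _
  rw [hpre, if_neg (lt_irrefl _)]
  exact hH _ _ _ fun m hm => hst l m hm

/-! ### Combinatorics of bad pairs -/

theorem exists_pair (k : ℕ) : ∀ (X : ℕ → ℕ) (o : ℕ), (∀ m, m < 2 ^ k → X (o + m) < k) →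
    ∃ p q, o ≤ p ∧ p < q ∧ q < o + 2 ^ k ∧ X p = X q ∧ ∀ r, p < r → r < q → X r ≤ X q := by
  induction k with
  | zero => intro X o h; exact absurd (h 0 (by simp)) (by simp)
  | succ k ih =>
    intro X o h
    rw [pow_succ] at h ⊢
    by_cases h1 : ∀ m, m < 2 ^ k → X (o + m) < k
    · obtain ⟨p, q, a, b, c, d, e⟩ := ih X o h1
      exact ⟨p, q, a, b, by omega, d, e⟩
    by_cases h2 : ∀ m, m < 2 ^ k → X (o + 2 ^ k + m) < k
    · obtain ⟨p, q, a, b, c, d, e⟩ := ih X (o + 2 ^ k) h2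
      exact ⟨p, q, by omega, b, by omega, d, e⟩
    push Not at h1 h2
    obtain ⟨a, ha, ha'⟩ := h1
    obtain ⟨b, hb, hb'⟩ := h2
    have h3 := h a (by omega)
    have h4 := h (2 ^ k + b) (by omega)
    rw [← add_assoc] at h4
    refine ⟨o + a, o + 2 ^ k + b, by omega, by omega, by omega, by omega, fun r hr hr' => ?_⟩
    have h5 := h (r - o) (by omega)
    rw [show o + (r - o) = r by omega] at h5
    omega

theorem exists_ruler (k : ℕ) : ∃ w : ℕ → ℕ, (∀ m, m < 2 ^ k - 1 → w m < k) ∧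
    ∀ p q, p < q → q < 2 ^ k - 1 → w p = w q → ∃ r, p < r ∧ r < q ∧ w q < w r := by
  induction k with
  | zero => exact ⟨fun _ => 0, by simp, by simp⟩
  | succ k ih =>
    obtain ⟨w, h1, h2⟩ := ih
    have hk : 0 < 2 ^ k := by positivity
    refine ⟨fun m => if m < 2 ^ k - 1 then w m else if m = 2 ^ k - 1 then k else w (m - 2 ^ k),
      ?_, ?_⟩
    · intro m hm
      rw [pow_succ] at hm
      dsimp only
      split_ifs with h3 h4
      · have := h1 m h3; omega
      · omega
      · have := h1 (m - 2 ^ k) (by omega); omega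
    · intro p q hpq hq hw
      rw [pow_succ] at hq
      by_cases a : q < 2 ^ k - 1
      · have b : p < 2 ^ k - 1 := by omega
        simp only [a, b, if_true] at hw
        obtain ⟨r, r1, r2, r3⟩ := h2 p q hpq a hw
        refine ⟨r, r1, r2, ?_⟩
        have c : r < 2 ^ k - 1 := by omega
        simp only [a, c, if_true]; exact r3
      by_cases b : q = 2 ^ k - 1
      · have c : p < 2 ^ k - 1 := by omega
        simp only [c, if_true, b] at hw
        have := h1 p c
        simp at hw
        omega
      by_cases c : p < 2 ^ k - 1
      · refine ⟨2 ^ k - 1, by omega, by omega, ?_⟩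
        simp only [a, b, if_false, lt_irrefl, if_true]
        exact h1 _ (by omega)
      by_cases d : p = 2 ^ k - 1
      · simp only [a, b, d, if_false, lt_irrefl, if_true] at hw
        have := h1 (q - 2 ^ k) (by omega)
        omega
      simp only [a, b, c, d, if_false] at hw
      obtain ⟨r, r1, r2, r3⟩ := h2 (p - 2 ^ k) (q - 2 ^ k) (by omega) (by omega) hw
      refine ⟨r + 2 ^ k, by omega, by omega, ?_⟩
      have e1 : ¬ (r + 2 ^ k < 2 ^ k - 1) := by omega
      have e2 : ¬ (r + 2 ^ k = 2 ^ k - 1) := by omega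
      simp only [a, b, e1, e2, if_false, Nat.add_sub_cancel]
      exact r3

/-- value of the first bits of a bit sequence, least significant bit first -/
def bval (b : ℕ → Bool) : ℕ → ℕ
  | 0 => 0
  | i + 1 => bval b i + (b i).toNat * 2 ^ i

theorem bval_lt (b : ℕ → Bool) (i : ℕ) : bval b i < 2 ^ i := by
  induction i with
  | zero => simp [bval]
  | succ i ih =>
    rw [bval, pow_succ]
    cases b i <;> simp <;> omega

theorem bval_congr {b b' : ℕ → Bool} {i : ℕ} (h : ∀ r, r < i → b r = b' r) :
    bval b i = bval b' i := by
  induction i with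
  | zero => rfl
  | succ i ih =>
    rw [bval, bval, ih fun r hr => h r (by omega), h i (by omega)]

theorem bval_testBit (v i : ℕ) : bval (fun r => v.testBit r) i = v % 2 ^ i := by
  induction i with
  | zero => simp [bval, Nat.mod_one]
  | succ i ih =>
    rw [bval, ih, Nat.mod_pow_succ, mul_comm, Nat.testBit_eq_decide_div_mod_eq]
    rcases Nat.mod_two_eq_zero_or_one (v / 2 ^ i) with h | h <;> simp [h]

theorem bval_mod_two (b : ℕ → Bool) (i : ℕ) (hi : 0 < i) : bval b i % 2 = (b 0).toNat := by
  induction i, hi using Nat.le_induction with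
  | base => cases h : b 0 <;> simp [bval, h]
  | succ i hi ih =>
    obtain ⟨k, rfl⟩ : ∃ k, i = k + 1 := ⟨i - 1, by omega⟩
    rw [bval, pow_succ]
    generalize 2 ^ k = c at *
    cases b (k + 1) <;> simp <;> omega

theorem bval_eq_step (x b : ℕ → Bool) (i : ℕ) :
    (decide (bval x i = bval b i) && (x i == b i)) = decide (bval x (i + 1) = bval b (i + 1)) := by
  have h1 := bval_lt x i
  have h2 := bval_lt b i
  rw [bval, bval]
  cases x i <;> cases b i <;> simp <;> omega

theorem bval_le_step (x b : ℕ → Bool) (i : ℕ) :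
    (if x i = b i then decide (bval x i ≤ bval b i) else b i)
      = decide (bval x (i + 1) ≤ bval b (i + 1)) := by
  have h1 := bval_lt x i
  have h2 := bval_lt b i
  rw [bval, bval]
  cases x i <;> cases b i <;> simp <;> omega

/-- flag: some occurrence of `j` among the first `m` values is not yet followed by a larger one -/
def seenR (X : ℕ → ℕ) (j : ℕ) : ℕ → Bool
  | 0 => false
  | m + 1 => decide (X m = j) || (seenR X j m && decide (X m ≤ j))

theorem seenR_iff (X : ℕ → ℕ) (j m : ℕ) : seenR X j m = true ↔
    ∃ p, p < m ∧ X p = j ∧ ∀ r, p < r → r < m → X r ≤ j := by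
  induction m with
  | zero => simp [seenR]
  | succ m ih =>
    simp only [seenR, Bool.or_eq_true, Bool.and_eq_true, decide_eq_true_eq, ih]
    constructor
    · rintro (h | ⟨⟨p, h1, h2, h3⟩, h4⟩)
      · exact ⟨m, by omega, h, fun r _ _ => by omega⟩
      · refine ⟨p, by omega, h2, fun r hr hr' => ?_⟩
        rcases Nat.lt_or_ge r m with h | h
        · exact h3 r hr h
        · rwa [show r = m by omega]
    · rintro ⟨p, h1, h2, h3⟩
      rcases Nat.lt_or_ge p m with h | h
      · exact Or.inr ⟨⟨p, h, h2, fun r hr hr' => h3 r hr (by omega)⟩, h3 m h (by omega)⟩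
      · left; rwa [← show p = m by omega]

/-! ### The automaton -/

abbrev AI := Bool ⊕ Bool
abbrev AO := Bool ⊕ (Bool × Bool)

def bI : AI → Bool
  | .inl b => b
  | .inr _ => false

def bO : AO → Bool
  | .inl b => b
  | .inr _ => false

/-- States: round start, countdown after a completed round, and inside of a round. -/
inductive St where
  | start : St
  | close : ℕ → St
  | run : Bool → Bool → Bool → Bool → ℕ → St

def St.isRun : St → Prop
  | .run _ _ _ _ _ => True
  | _ => False

def St.isClose : St → Prop
  | .close _ => True
  | _ => False

def readSt (seen eq le : Bool) (i : ℕ) (x o : Bool) : St :=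
  .run seen (eq && (x == o)) (if x = o then le else o) o i

def stp0 (n : ℕ) (q : St) (x o : Bool) : St :=
  match q with
  | .start => readSt false true true 0 x o
  | .close 0 => .close n
  | .close (c + 1) => .close c
  | .run seen eq le _ i =>
    if i + 1 < n then readSt seen eq le (i + 1) x o
    else if (seen && eq) = true then .close n
    else readSt (eq || (seen && le)) true true 0 x o

def stp (n : ℕ) (q : St) (a : AI) (o : AO) : St :=
  if a.isRight = true then .start else stp0 n q (bI a) (bO o)

def DA (n : ℕ) : StreettCost St (AI × AO) (Fin n × Bool) where
  qI := .start
  δ q a := stp n q a.1 a.2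
  req j := {q | (∃ s e l, q = .run s e l j.2 j.1) ∨ q = .close n}
  res _ := {q | q = .start ∨ q = .close 0}
  Cst j q a := decide ((∃ c, q = .close (c + 1)) ∨
    ∃ s e l b, stp n q a.1 a.2 = .run s e l b j.1 ∧ b ≠ j.2)

def wd (α : ℕ → AI) (β : ℕ → AO) : ℕ → AI × AO := fun k => (α k, β k)

def st (n : ℕ) (α : ℕ → AI) (β : ℕ → AO) (t : ℕ) : St :=
  (DA n).stateAt .start (wd α β) t

def sg (n : ℕ) (α : ℕ → AI) (β : ℕ → AO) (j : Fin n × Bool) (a b : ℕ) : ℕ :=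
  (DA n).segCost j .start (wd α β) a b

section round
variable {n : ℕ} {α : ℕ → AI} {β : ℕ → AO}

theorem st_succ_hash {t : ℕ} (h : (α t).isRight = true) : st n α β (t + 1) = .start := by
  show stp n _ (α t) (β t) = _
  rw [stp, if_pos h]

theorem st_succ {t : ℕ} (h : (α t).isRight = false) :
    st n α β (t + 1) = stp0 n (st n α β t) (bI (α t)) (bO (β t)) := by
  show stp n _ (α t) (β t) = _
  rw [stp, if_neg (by simp [h])]
  rfl

theorem st_ne_start {t : ℕ} (h : (α t).isRight = false) : st n α β (t + 1) ≠ .start := by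
  rw [st_succ h]
  generalize st n α β t = q
  rcases q with _ | c | _
  · simp [stp0, readSt]
  · cases c <;> simp [stp0]
  · simp only [stp0, readSt]
    split_ifs <;> simp

theorem st_close_succ {t c : ℕ} (h : (α t).isRight = false) (hc : st n α β t = .close (c + 1)) :
    st n α β (t + 1) = .close c := by
  rw [st_succ h, hc]; rfl

theorem st_close0_succ {t : ℕ} (h : (α t).isRight = false) (hc : st n α β t = .close 0) :
    st n α β (t + 1) = .close n := by
  rw [st_succ h, hc]; rfl

theorem isClose_iff (q : St) : q.isClose ↔ ∃ c, q = .close c := by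
  cases q <;> simp [St.isClose]

theorem isRun_iff (q : St) : q.isRun ↔ ∃ s e l b i, q = .run s e l b i := by
  cases q <;> simp [St.isRun]

theorem st_close_mono {a b : ℕ} (hab : a ≤ b) (h : ∀ t, a ≤ t → t < b → (α t).isRight = false)
    (hc : (st n α β a).isClose) : (st n α β b).isClose := by
  induction b, hab using Nat.le_induction with
  | base => exact hc
  | succ b hab ih =>
    obtain ⟨c, hc⟩ := (isClose_iff _).1 (ih fun t h1 h2 => h t h1 (by omega))
    have hb := h b hab (by omega)
    rcases c with _ | c
    · rw [st_close0_succ hb hc]; trivial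
    · rw [st_close_succ hb hc]; trivial

theorem st_close_down {a c : ℕ} (h : ∀ t, a ≤ t → t < a + c → (α t).isRight = false)
    (hc : st n α β a = .close c) : st n α β (a + c) = .close 0 := by
  induction c generalizing a with
  | zero => exact hc
  | succ c ih =>
    have := ih (a := a + 1) (fun t h1 h2 => h t (by omega) (by omega))
      (st_close_succ (h a le_rfl (by omega)) hc)
    rwa [show a + (c + 1) = a + 1 + c by omega]

/-- positions stay below the block length -/
def St.wf (n : ℕ) : St → Prop
  | .start => True
  | .close c => c ≤ n
  | .run _ _ _ _ i => i < n

theorem stp_wf (hn : 0 < n) (q : St) (a : AI) (o : AO) (h : q.wf n) : (stp n q a o).wf n := by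
  unfold stp
  split_ifs with h1
  · trivial
  rcases q with _ | c | _
  · simpa [stp0, readSt, St.wf] using hn
  · cases c <;> simp [stp0, St.wf] at h ⊢
    omega
  · simp only [stp0, readSt]
    split_ifs <;> simp [St.wf, *]

theorem st_wf (hn : 0 < n) (t : ℕ) : (st n α β t).wf n := by
  induction t with
  | zero => trivial
  | succ t ih => exact stp_wf hn _ _ _ ih

def xb (n : ℕ) (α : ℕ → AI) (s m : ℕ) : ℕ → Bool := fun i => bI (α (s + m * n + i))

def XV (n : ℕ) (α : ℕ → AI) (s : ℕ) : ℕ → ℕ := fun m => bval (xb n α s m) n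

def RInv (n : ℕ) (α : ℕ → AI) (β : ℕ → AO) (s : ℕ) (b : ℕ → Bool) (t : ℕ) : Prop :=
  (t = s ∧ st n α β t = .start) ∨
  (∃ m i, i < n ∧ t = s + m * n + i + 1 ∧
    st n α β t = .run (seenR (XV n α s) (bval b n) m)
      (decide (bval (xb n α s m) (i + 1) = bval b (i + 1)))
      (decide (bval (xb n α s m) (i + 1) ≤ bval b (i + 1))) (b i) i ∧
    ∀ m', m' < m → ¬ (seenR (XV n α s) (bval b n) m' = true ∧ XV n α s m' = bval b n)) ∨
  ((∃ c, st n α β t = .close c) ∧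
    ∃ m', s + (m' + 1) * n < t ∧ seenR (XV n α s) (bval b n) m' = true ∧
      XV n α s m' = bval b n)

theorem read_zero (s m : ℕ) (b : ℕ → Bool) (sn : Bool) (x : Bool) (hx : x = xb n α s m 0) :
    readSt sn true true 0 x (b 0) = .run sn
      (decide (bval (xb n α s m) (0 + 1) = bval b (0 + 1)))
      (decide (bval (xb n α s m) (0 + 1) ≤ bval b (0 + 1))) (b 0) 0 := by
  rw [readSt, ← bval_eq_step, ← bval_le_step, hx]
  simp [bval]

theorem read_succ (s m i : ℕ) (b : ℕ → Bool) (sn : Bool) (x : Bool) (hx : x = xb n α s m i) :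
    readSt sn (decide (bval (xb n α s m) i = bval b i))
      (decide (bval (xb n α s m) i ≤ bval b i)) i x (b i) = .run sn
      (decide (bval (xb n α s m) (i + 1) = bval b (i + 1)))
      (decide (bval (xb n α s m) (i + 1) ≤ bval b (i + 1))) (b i) i := by
  rw [readSt, ← bval_eq_step, ← bval_le_step, hx]

theorem round_inv (hn : 0 < n) (s : ℕ) (b : ℕ → Bool) (hs : st n α β s = .start)
    (e : ℕ) (hse : s ≤ e) (hnh : ∀ t, s ≤ t → t < e → (α t).isRight = false)
    (hb : ∀ t, s ≤ t → t < e → (st n α β (t + 1)).isRun → bO (β t) = b ((t - s) % n)) :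
    RInv n α β s b e := by
  induction e, hse using Nat.le_induction with
  | base => exact Or.inl ⟨rfl, hs⟩
  | succ e hse ih =>
    have hh := hnh e hse (by omega)
    have hstep := st_succ (n := n) (β := β) hh
    have hbe := hb e hse (by omega)
    rcases ih (fun t h1 h2 => hnh t h1 (by omega)) (fun t h1 h2 => hb t h1 (by omega)) with
      ⟨h1, h2⟩ | ⟨m, i, hi, h1, h2, h3⟩ | ⟨⟨c, hc⟩, m', h1, h2, h3⟩
    · right; left
      rw [h2] at hstep
      have hbe := hbe (by rw [hstep]; trivial)
      rw [h1, Nat.sub_self, Nat.zero_mod] at hbe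
      refine ⟨0, 0, hn, by omega, ?_, by simp⟩
      rw [hstep, stp0, h1, hbe]
      exact read_zero s 0 b _ _ (by simp [xb])
    · rw [h2, stp0] at hstep
      by_cases hin : i + 1 < n
      · right; left
        rw [if_pos hin] at hstep
        have hbe := hbe (by rw [hstep]; trivial)
        have hmod : (e - s) % n = i + 1 := by
          rw [show e - s = i + 1 + m * n by omega, Nat.add_mul_mod_self_right, Nat.mod_eq_of_lt hin]
        rw [hmod] at hbe
        refine ⟨m, i + 1, hin, by omega, ?_, h3⟩
        rw [hstep, hbe]
        exact read_succ s m (i + 1) b _ _ (by rw [xb, h1]; rfl)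
      · have hi1 : i + 1 = n := by omega
        rw [if_neg hin, hi1] at hstep
        split_ifs at hstep with hcomp
        · right; right
          refine ⟨⟨_, hstep⟩, m, ?_, ?_⟩
          · rw [add_mul, one_mul]; omega
          · simpa [XV] using hcomp
        · right; left
          have hbe := hbe (by rw [hstep]; trivial)
          have hmod : (e - s) % n = 0 := by
            rw [show e - s = (m + 1) * n by rw [add_mul, one_mul]; omega]
            exact Nat.mul_mod_left _ _
          rw [hmod] at hbe
          have he : e = s + (m + 1) * n := by rw [add_mul, one_mul]; omega
          refine ⟨m + 1, 0, hn, by omega, ?_, ?_⟩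
          · rw [hstep, hbe]
            exact read_zero s (m + 1) b _ _ (by rw [xb, he]; rfl)
          · intro m' hm'
            rcases Nat.lt_or_ge m' m with h | h
            · exact h3 m' h
            · rw [show m' = m by omega]
              simpa [XV] using hcomp
    · right; right
      refine ⟨(isClose_iff _).1 (st_close_mono (Nat.le_succ e) ?_ (by rw [hc]; trivial)), m',
        by omega, h2, h3⟩
      intro t ht ht'
      rw [show t = e by omega]; exact hh

/-! ### Costs -/

theorem sg_split (j : Fin n × Bool) {a b c : ℕ} (hab : a ≤ b) (hbc : b ≤ c) :
    sg n α β j a c = sg n α β j a b + sg n α β j b c :=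
  segCost_split _ _ _ _ hab hbc

theorem sg_succ (j : Fin n × Bool) (a : ℕ) :
    sg n α β j a (a + 1) = (decide ((∃ c, st n α β a = .close (c + 1)) ∨
    ∃ s e l b, st n α β (a + 1) = .run s e l b j.1 ∧ b ≠ j.2)).toNat :=
  segCost_succ _ _ _ _ _

/-- potential: cost that is still to be paid -/
def phi (n : ℕ) : St → ℕ
  | .start => 0
  | .close c => c
  | .run _ _ _ _ _ => n

theorem phi_step (j : Fin n × Bool) (a : ℕ) (h : (α a).isRight = false) :
    phi n (st n α β a) ≤ sg n α β j a (a + 1) + phi n (st n α β (a + 1)) := by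
  rcases hq : st n α β a with _ | c | _
  · simp [phi]
  · rcases c with _ | c
    · simp [phi]
    · rw [st_close_succ h hq, sg_succ, hq]
      simp [phi, add_comm]
  · rw [st_succ h, hq]
    simp only [stp0, readSt]
    split_ifs <;> simp [phi]

theorem phi_le (j : Fin n × Bool) {a b : ℕ} (hab : a ≤ b)
    (h : ∀ t, a ≤ t → t < b → (α t).isRight = false) :
    phi n (st n α β a) ≤ sg n α β j a b + phi n (st n α β b) := by
  induction b, hab using Nat.le_induction with
  | base => simp
  | succ b hab ih =>
    have h1 := ih fun t h1 h2 => h t h1 (by omega)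
    have h2 := phi_step (β := β) j b (h b hab (by omega))
    rw [sg_split j hab (show b ≤ b + 1 by omega)]
    omega

theorem close_resp (j : Fin n × Bool) (c : ℕ) : ∀ a, st n α β a = .close c →
    ∃ t, a ≤ t ∧ (st n α β t = .start ∨ st n α β t = .close 0) ∧ sg n α β j a t ≤ c := by
  induction c with
  | zero => intro a ha; exact ⟨a, le_rfl, Or.inr ha, (segCost_self _ _ _ _ _).le⟩
  | succ c ih =>
    intro a ha
    have h1 : sg n α β j a (a + 1) ≤ 1 := by rw [sg_succ]; exact Bool.toNat_le _
    cases h : (α a).isRight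
    · obtain ⟨t, h2, h3, h4⟩ := ih (a + 1) (st_close_succ h ha)
      refine ⟨t, by omega, h3, ?_⟩
      rw [sg_split j (show a ≤ a + 1 by omega) h2]
      omega
    · exact ⟨a + 1, by omega, Or.inl (st_succ_hash h), by omega⟩

end round

/-! ### Rounds -/

/-- start of the current round -/
def ls (α : ℕ → AI) : ℕ → ℕ
  | 0 => 0
  | t + 1 => if (α t).isRight = true then t + 1 else ls α t

theorem ls_le (α : ℕ → AI) (t : ℕ) : ls α t ≤ t := by
  induction t with
  | zero => exact le_rfl
  | succ t ih => rw [ls]; split_ifs <;> omega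

theorem ls_nohash (α : ℕ → AI) (t : ℕ) :
    ∀ r, ls α t ≤ r → r < t → (α r).isRight = false := by
  induction t with
  | zero => intro r _ h; omega
  | succ t ih =>
    intro r h1 h2
    rw [ls] at h1
    split_ifs at h1 with h3
    · omega
    · rcases Nat.lt_or_ge r t with h | h
      · exact ih r h1 h
      · rw [show r = t by omega]; simpa using h3

theorem ls_const (α : ℕ → AI) {a b : ℕ} (hab : a ≤ b)
    (h : ∀ t, a ≤ t → t < b → (α t).isRight = false) : ls α b = ls α a := by
  induction b, hab using Nat.le_induction with
  | base => rfl
  | succ b hab ih =>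
    rw [ls, h b hab (by omega)]
    exact ih fun t h1 h2 => h t h1 (by omega)

theorem ls_mid (α : ℕ → AI) {r t : ℕ} (h1 : ls α t ≤ r) (h2 : r ≤ t) : ls α r = ls α t :=
  (ls_const α h2 fun _ h3 h4 => ls_nohash α t _ (by omega) h4).symm

theorem ls_congr {α α' : ℕ → AI} {t : ℕ} (h : ∀ r, r < t → α r = α' r) : ls α t = ls α' t := by
  induction t with
  | zero => rfl
  | succ t ih => rw [ls, ls, h t (by omega), ih fun r hr => h r (by omega)]

theorem st_ls (n : ℕ) (α : ℕ → AI) (β : ℕ → AO) (t : ℕ) : st n α β (ls α t) = .start := by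
  induction t with
  | zero => rfl
  | succ t ih =>
    rw [ls]
    split_ifs with h
    · exact st_succ_hash h
    · exact ih

/-! ### Player O's strategy -/

def IsPair (k : ℕ) (X : ℕ → ℕ) (q : ℕ) : Prop :=
  q < 2 ^ k ∧ ∃ p, p < q ∧ X p = X q ∧ ∀ r, p < r → r < q → X r ≤ X q

def pick (k : ℕ) (X : ℕ → ℕ) : ℕ :=
  if h : ∃ q, IsPair k X q then X h.choose else 0

def trunc (k : ℕ) (X : ℕ → ℕ) : ℕ → ℕ := fun m => if m < 2 ^ k then X m else 0

def Jc (n : ℕ) (α : ℕ → AI) (s : ℕ) : ℕ := pick (2 ^ n) (trunc (2 ^ n) (XV n α s))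

theorem Jc_congr {n : ℕ} {α α' : ℕ → AI} {s : ℕ}
    (h : ∀ r, r < s + n * 2 ^ 2 ^ n → α r = α' r) : Jc n α s = Jc n α' s := by
  have : trunc (2 ^ n) (XV n α s) = trunc (2 ^ n) (XV n α' s) := by
    funext m
    unfold trunc
    split_ifs with hm
    · refine bval_congr fun r hr => ?_
      unfold xb
      rw [h]
      have : (m + 1) * n ≤ 2 ^ 2 ^ n * n := Nat.mul_le_mul_right _ hm
      rw [add_mul, one_mul, mul_comm (2 ^ 2 ^ n)] at this
      omega
    · rfl
  rw [Jc, Jc, this]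

theorem Jc_spec (n : ℕ) (α : ℕ → AI) (s : ℕ) : Jc n α s < 2 ^ n ∧
    ∃ q, q < 2 ^ 2 ^ n ∧ XV n α s q = Jc n α s ∧ seenR (XV n α s) (Jc n α s) q = true := by
  have hX : ∀ m, XV n α s m < 2 ^ n := fun m => bval_lt _ _
  have hex : ∃ q, IsPair (2 ^ n) (trunc (2 ^ n) (XV n α s)) q := by
    obtain ⟨p, q, -, h2, h3, h4, h5⟩ := exists_pair (2 ^ n) (trunc (2 ^ n) (XV n α s)) 0 (by
      intro m hm
      simp only [trunc, zero_add, if_pos hm]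
      exact hX m)
    exact ⟨q, by omega, p, h2, h4, h5⟩
  have hJ : Jc n α s = trunc (2 ^ n) (XV n α s) hex.choose := by
    rw [Jc, pick, dif_pos hex]
  obtain ⟨h1, p, h2, h3, h4⟩ := hex.choose_spec
  generalize hex.choose = q at *
  have e : ∀ r, r ≤ q → trunc (2 ^ n) (XV n α s) r = XV n α s r := fun r hr => by
    rw [trunc, if_pos (by omega)]
  rw [e q le_rfl] at hJ h3
  rw [e p (by omega)] at h3
  refine ⟨hJ ▸ hX q, q, h1, hJ.symm, ?_⟩
  rw [seenR_iff, hJ]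
  refine ⟨p, h2, h3, fun r hr hr' => ?_⟩
  have := h4 r hr hr'
  rwa [e r (by omega), e q le_rfl] at this

def honest (n : ℕ) (α : ℕ → AI) (t : ℕ) : AO :=
  .inl ((Jc n α (ls α t)).testBit ((t - ls α t) % n))

theorem honest_congr {n : ℕ} {α α' : ℕ → AI} {t : ℕ}
    (h : ∀ r, r < t + n * 2 ^ 2 ^ n → α r = α' r) : honest n α t = honest n α' t := by
  have h1 : ls α t = ls α' t := ls_congr fun r hr => h r (by omega)
  have h2 := ls_le α t
  rw [honest, honest, ← h1, Jc_congr fun r hr => h r (by omega)]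

theorem honest_inv {n : ℕ} (hn : 0 < n) (α : ℕ → AI) (t : ℕ) :
    RInv n α (honest n α) (ls α t) (fun r => (Jc n α (ls α t)).testBit r) t := by
  refine round_inv hn _ _ (st_ls _ _ _ _) t (ls_le α t) (ls_nohash α t) fun r h1 h2 _ => ?_
  rw [honest, ls_mid α h1 (by omega)]
  rfl

theorem bval_Jc (n : ℕ) (α : ℕ → AI) (s : ℕ) :
    bval (fun r => (Jc n α s).testBit r) n = Jc n α s := by
  rw [bval_testBit, Nat.mod_eq_of_lt (Jc_spec n α s).1]

theorem honest_done {n : ℕ} (hn : 0 < n) (α : ℕ → AI) (t : ℕ)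
    (hr : (st n α (honest n α) t).isRun) : t ≤ ls α t + n * 2 ^ 2 ^ n := by
  rcases honest_inv hn α t with ⟨h1, h2⟩ | ⟨m, i, hi, h1, h2, h3⟩ | ⟨⟨c, hc⟩, -⟩
  · omega
  · obtain ⟨-, q, hq, hq1, hq2⟩ := Jc_spec n α (ls α t)
    rw [bval_Jc] at h3
    have hm : m ≤ q := by
      by_contra hlt
      exact h3 q (by omega) ⟨hq2, hq1⟩
    have : (m + 1) * n ≤ 2 ^ 2 ^ n * n := Nat.mul_le_mul_right _ (by omega)
    rw [add_mul, one_mul, mul_comm (2 ^ 2 ^ n)] at this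
    omega
  · rw [hc] at hr; exact hr.elim

theorem honest_run_resp {n : ℕ} (hn : 0 < n) (α : ℕ → AI) (s : ℕ) (j : Fin n × Bool)
    (hj : j.2 = (Jc n α s).testBit j.1) (d : ℕ) : ∀ t, ls α t = s →
    (st n α (honest n α) t).isRun → s + n * 2 ^ 2 ^ n < t + d →
    ∃ t', t ≤ t' ∧ (st n α (honest n α) t' = .start ∨ st n α (honest n α) t' = .close 0) ∧
      sg n α (honest n α) j t t' ≤ n := by
  induction d with
  | zero =>
    intro t h1 h2 h3
    have := honest_done hn α t h2
    omega
  | succ d ih =>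
    intro t h1 h2 h3
    obtain ⟨q1, q2, q3, q4, q5, hq⟩ := (isRun_iff _).1 h2
    cases h : (α t).isRight
    · have hl : ls α (t + 1) = s := by rw [ls, h]; exact h1
      have hinv := honest_inv hn α (t + 1)
      rw [hl] at hinv
      have hc0 : sg n α (honest n α) j t (t + 1) = 0 := by
        rw [sg_succ, hq]
        simp only [reduceCtorEq, exists_false, false_or]
        rw [decide_eq_false]; · rfl
        rintro ⟨s1, s2, s3, s4, h4, h5⟩
        rcases hinv with ⟨_, h6⟩ | ⟨m, i, _, _, h6, _⟩ | ⟨⟨c, h6⟩, _⟩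
        · rw [h6] at h4; cases h4
        · rw [h6] at h4
          injection h4 with _ _ _ h7 h8
          exact h5 (by rw [← h7, h8, hj])
        · rw [h6] at h4; cases h4
      have key : ∃ t', t + 1 ≤ t' ∧ (st n α (honest n α) t' = .start ∨
          st n α (honest n α) t' = .close 0) ∧ sg n α (honest n α) j (t + 1) t' ≤ n := by
        rcases hs : st n α (honest n α) (t + 1) with _ | c | _
        · exact absurd hs (st_ne_start h)
        · obtain ⟨t', h4, h5, h6⟩ := close_resp j c _ hs
          have hw := st_wf (α := α) (β := honest n α) hn (t + 1)
          rw [hs] at hw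
          exact ⟨t', h4, h5, h6.trans hw⟩
        · exact ih (t + 1) hl (by rw [hs]; trivial) (by omega)
      obtain ⟨t', h4, h5, h6⟩ := key
      refine ⟨t', by omega, h5, ?_⟩
      rw [sg_split j (show t ≤ t + 1 by omega) h4]
      omega
    · refine ⟨t + 1, by omega, Or.inl (st_succ_hash h), ?_⟩
      rw [sg_succ]
      exact (Bool.toNat_le _).trans hn

theorem honest_StCor_le {n : ℕ} (hn : 0 < n) (α : ℕ → AI) (t : ℕ) :
    (DA n).StCor .start (wd α (honest n α)) t ≤ (n : ℕ∞) := by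
  refine StCor_le' _ _ _ _ _ fun j hj => ?_
  rcases hj with ⟨s, e, l, h⟩ | h
  · change st n α (honest n α) t = _ at h
    refine honest_run_resp hn α (ls α t) j ?_ (n * 2 ^ 2 ^ n + 1) t rfl (by rw [h]; trivial) ?_
    · rcases honest_inv hn α t with ⟨_, h6⟩ | ⟨m, i, _, _, h6, _⟩ | ⟨⟨c, h6⟩, _⟩
      · rw [h6] at h; cases h
      · rw [h6] at h
        injection h with _ _ _ h7 h8
        rw [← h7, h8]
      · rw [h6] at h; cases h
    · have := ls_le α t; omega
  · exact close_resp j n t h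

def zeroW : ℕ → AI := fun _ => .inl false

theorem honest_StCor_ge {n : ℕ} (hn : 0 < n) (T : ℕ) :
    ∃ t, T ≤ t ∧ (n : ℕ∞) ≤ (DA n).StCor .start (wd zeroW (honest n zeroW)) t := by
  have hz : ∀ t, (zeroW t).isRight = false := fun _ => rfl
  have hls : ∀ t, ls zeroW t = 0 := fun t => ls_const zeroW (Nat.zero_le t) fun _ _ _ => rfl
  have h1 : (st n zeroW (honest n zeroW) (n * 2 ^ 2 ^ n + 1)).isClose := by
    rcases hs : st n zeroW (honest n zeroW) (n * 2 ^ 2 ^ n + 1) with _ | c | _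
    · exact absurd hs (st_ne_start (hz _))
    · trivial
    · have := honest_done hn zeroW (n * 2 ^ 2 ^ n + 1) (by rw [hs]; trivial)
      rw [hls] at this
      omega
  have h2 := st_close_mono (Nat.le_add_right (n * 2 ^ 2 ^ n + 1) T) (fun t _ _ => hz t) h1
  obtain ⟨c, hc⟩ := (isClose_iff _).1 h2
  have h3 := st_close0_succ (hz _) (st_close_down (fun t _ _ => hz t) hc)
  refine ⟨_, ?_, le_StCor' _ _ _ _ _ (⟨0, hn⟩, true) (Or.inr h3) fun t' ht' hres => ?_⟩
  · omega
  · have h4 := phi_le (β := honest n zeroW) (⟨0, hn⟩, true) ht' (fun t _ _ => hz t)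
    rw [h3] at h4
    have h5 : phi n (st n zeroW (honest n zeroW) t') = 0 := by
      rcases hres with h | h
      · change st n zeroW (honest n zeroW) t' = _ at h
        rw [h]; rfl
      · change st n zeroW (honest n zeroW) t' = _ at h
        rw [h]; rfl
    rw [h5] at h4
    exact h4

theorem part_one {n : ℕ} (hn : 0 < n) : ∃ f : ℕ → ℕ, DelayFn f ∧
    ∃ τO, OWinning f (DA n).Lang τO ∧ stratCost (DA n).wCost f τO = (n : ℕ∞) := by
  set K := n * 2 ^ 2 ^ n with hK
  have hK0 : 0 < K := by positivity
  let f : ℕ → ℕ := fun i => if i = 0 then K else 1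
  have hf : DelayFn f := by
    intro i
    simp only [f]
    split_ifs <;> omega
  have hF : ∀ t, ∑ i ∈ Finset.range (t + 1), f i = K + t := by
    intro t
    induction t with
    | zero => simp [f]
    | succ t ih => rw [Finset.sum_range_succ, ih]; simp [f]; omega
  let τ : List AI → AO := fun h => honest n (fun m => h.getD m default) (h.length - K)
  have hv : ∀ (u : ℕ → List AI) (v : ℕ → AO), (∀ i, (u i).length = f i) →
      (∀ i, v i = τ (oHist u i)) →
      (fun k => (flatWord u k, v k)) = wd (flatWord u) (honest n (flatWord u)) := by
    intro u v hu hv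
    funext k
    simp only [wd, hv k, τ, oHist_length u f hu, hF]
    rw [show K + k - K = k by omega, honest_congr (α' := flatWord u)]
    intro r hr
    exact oHist_getD u f hf hu k r (by rw [hF]; omega)
  have hle : ∀ (α : ℕ → AI), (DA n).wCost (wd α (honest n α)) ≤ n := by
    intro α
    exact Filter.limsup_le_of_le (by isBoundedDefault)
      (Filter.Eventually.of_forall fun t => honest_StCor_le hn α t)
  refine ⟨f, hf, τ, ?_, le_antisymm ?_ ?_⟩
  · intro u v h1 h2
    rw [hv u v h1 h2]
    exact lt_of_le_of_lt (hle _) (ENat.natCast_lt_top n)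
  · refine iSup_le fun u => iSup_le fun v => iSup_le fun h => ?_
    rw [hv u v h.1 h.2]
    exact hle _
  · have hu : ∀ i, (cut zeroW f i).length = f i := by intro i; simp [cut]
    have := hv (cut zeroW f) (fun i => τ (oHist (cut zeroW f) i)) hu (fun i => rfl)
    have hfl : flatWord (cut zeroW f) = zeroW := funext fun m => cut_flatWord _ _ hf m
    refine le_trans ?_ (le_iSup_of_le (cut zeroW f) (le_iSup_of_le
      (fun i => τ (oHist (cut zeroW f) i)) (le_iSup_of_le ⟨hu, fun i => rfl⟩ le_rfl)))
    rw [this, hfl]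
    refine Filter.le_limsup_of_frequently_le ?_ (by isBoundedDefault)
    rw [Filter.frequently_atTop]
    intro T
    obtain ⟨t, h1, h2⟩ := honest_StCor_ge hn T
    exact ⟨t, h1, h2⟩

/-! ### Player I's strategy -/

theorem st_congr {n : ℕ} {α α' : ℕ → AI} {β β' : ℕ → AO} {t : ℕ}
    (h : ∀ r, r < t → α r = α' r) (h' : ∀ r, r < t → β r = β' r) :
    st n α β t = st n α' β' t := by
  induction t with
  | zero => rfl
  | succ t ih =>
    show stp n (st n α β t) (α t) (β t) = stp n (st n α' β' t) (α' t) (β' t)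
    rw [ih (fun r hr => h r (by omega)) (fun r hr => h' r (by omega)), h t (by omega),
      h' t (by omega)]

/-- A round that is completed although Player I has avoided all bad pairs is expensive. -/
theorem cheat_cost {n : ℕ} (hn : 0 < n) (α : ℕ → AI) (β : ℕ → AO) (w : ℕ → ℕ)
    (hw1 : ∀ m, m < 2 ^ 2 ^ n - 1 → w m < 2 ^ n)
    (hw2 : ∀ p q, p < q → q < 2 ^ 2 ^ n - 1 → w p = w q → ∃ r, p < r ∧ r < q ∧ w q < w r)
    (s e : ℕ) (hse : s < e) (hs : st n α β s = .start) (he : st n α β e = .close 0)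
    (hnh : ∀ t, s ≤ t → t < e → (α t).isRight = false)
    (hα : ∀ t, s ≤ t → t < e → bI (α t) = if t < s + n * (2 ^ 2 ^ n - 1) then
      (w ((t - s) / n)).testBit ((t - s) % n) else !bO (β s)) :
    ∃ t, s ≤ t ∧ ((n + 1 : ℕ) : ℕ∞) ≤ (DA n).StCor .start (wd α β) t := by
  let b : ℕ → Bool := fun i => bO (β (s + i))
  -- a mismatch exists
  have hmis : ∃ t, s ≤ t ∧ t < e ∧ (st n α β (t + 1)).isRun ∧ bO (β t) ≠ b ((t - s) % n) := by
    by_contra hcon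
    push Not at hcon
    have hinv := round_inv hn s b hs e hse.le hnh hcon
    rcases hinv with ⟨h1, _⟩ | ⟨m, i, _, _, h6, _⟩ | ⟨_, q, h1, h2, h3⟩
    · omega
    · rw [h6] at he; cases he
    · obtain ⟨p, hp1, hp2, hp3⟩ := (seenR_iff _ _ _).1 h2
      have hsmall : ∀ m, m ≤ q → m < 2 ^ 2 ^ n - 1 → XV n α s m = w m := by
        intro m hm hm2
        have hmq : (m + 1) * n ≤ (q + 1) * n := Nat.mul_le_mul_right _ (by omega)
        have hmN : (m + 1) * n ≤ (2 ^ 2 ^ n - 1) * n := Nat.mul_le_mul_right _ (by omega)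
        rw [add_mul, one_mul] at hmq hmN
        have : XV n α s m = bval (fun r => (w m).testBit r) n := by
          refine bval_congr fun r hr => ?_
          show bI (α (s + m * n + r)) = _
          rw [hα _ (by omega) (by omega), if_pos (by rw [mul_comm n]; omega),
            show s + m * n + r - s = r + m * n by omega, Nat.add_mul_mod_self_right,
            Nat.mod_eq_of_lt hr, Nat.add_mul_div_right _ _ hn, Nat.div_eq_of_lt hr, zero_add]
        rw [this, bval_testBit, Nat.mod_eq_of_lt (hw1 m hm2)]
      have hbig : ∀ m, m ≤ q → XV n α s m = bval b n → m < 2 ^ 2 ^ n - 1 := by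
        intro m hm hX
        by_contra hlt
        have hmN : (2 ^ 2 ^ n - 1) * n ≤ m * n := Nat.mul_le_mul_right _ (by omega)
        have hmq : (m + 1) * n ≤ (q + 1) * n := Nat.mul_le_mul_right _ (by omega)
        rw [add_mul, one_mul] at hmq
        have h4 := congrArg (· % 2) hX
        simp only [XV] at h4
        rw [bval_mod_two _ _ hn, bval_mod_two _ _ hn] at h4
        have h5 : xb n α s m 0 = !b 0 := by
          show bI (α (s + m * n + 0)) = _
          rw [hα _ (by omega) (by omega), if_neg (by rw [mul_comm n]; omega)]
          rfl
        rw [h5] at h4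
        revert h4
        cases b 0 <;> simp
      have hq := hbig q le_rfl h3
      have hp := hbig p hp1.le hp2
      obtain ⟨r, r1, r2, r3⟩ := hw2 p q hp1 hq
        (by rw [← hsmall p hp1.le hp, ← hsmall q le_rfl hq, hp2, h3])
      have := hp3 r r1 r2
      rw [hsmall r r2.le (by omega), ← h3, hsmall q le_rfl hq] at this
      omega
  obtain ⟨t, ht1, ht2, ht3, ht4⟩ := hmis
  have hnc : ∀ r, s ≤ r → r ≤ t + 1 → ¬ (st n α β r).isClose := by
    intro r hr1 hr2 hc
    have h1 := st_close_mono hr2 (fun x h1 h2 => hnh x (by omega) (by omega)) hc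
    obtain ⟨_, _, _, _, _, h⟩ := (isRun_iff _).1 ht3
    rw [h] at h1; exact h1
  have hte : t + 1 < e := by
    rcases Nat.lt_or_ge (t + 1) e with h | h
    · exact h
    · have : t + 1 = e := by omega
      rw [this, he] at ht3; exact ht3.elim
  -- positions in runs
  have hpos : ∀ r, s ≤ r → r ≤ t → ∃ q1 q2 q3, st n α β (r + 1) =
      .run q1 q2 q3 (bO (β r)) ((r - s) % n) := by
    intro r hr
    induction r, hr using Nat.le_induction with
    | base =>
      intro _
      rw [st_succ (hnh s le_rfl hse), hs, Nat.sub_self, Nat.zero_mod]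
      exact ⟨_, _, _, rfl⟩
    | succ r hr ih =>
      intro hrt
      obtain ⟨q1, q2, q3, h⟩ := ih (by omega)
      have hstep := st_succ (n := n) (β := β) (hnh (r + 1) (by omega) (by omega))
      have hncl := hnc (r + 1 + 1) (by omega) (by omega)
      rw [h, stp0] at hstep
      have hmod := Nat.mod_lt (r - s) hn
      have hdm := Nat.div_add_mod (r - s) n
      split_ifs at hstep with hc1 hc2
      · have : (r + 1 - s) % n = (r - s) % n + 1 := by
          rw [show r + 1 - s = (r - s) % n + 1 + n * ((r - s) / n) by omega,
            Nat.add_mul_mod_self_left, Nat.mod_eq_of_lt hc1]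
        rw [this, hstep]
        exact ⟨_, _, _, rfl⟩
      · rw [hstep] at hncl
        exact absurd trivial hncl
      · have : (r + 1 - s) % n = 0 := by
          rw [show r + 1 - s = n + n * ((r - s) / n) by omega,
            Nat.add_mul_mod_self_left, Nat.mod_self]
        rw [this, hstep]
        exact ⟨_, _, _, rfl⟩
  have hmod := Nat.mod_lt (t - s) hn
  set i := (t - s) % n with hi
  have hile : i ≤ t - s := Nat.mod_le _ _
  have hine : i ≠ t - s := by
    intro h
    apply ht4
    show _ = bO (β (s + i))
    rw [h, show s + (t - s) = t by omega]
  obtain ⟨p1, p2, p3, hp⟩ := hpos (s + i) (by omega) (by omega)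
  rw [show s + i - s = i by omega, Nat.mod_eq_of_lt hmod] at hp
  obtain ⟨q1, q2, q3, hq⟩ := hpos t ht1 le_rfl
  rw [← hi] at hq
  let j : Fin n × Bool := (⟨i, hmod⟩, bO (β (s + i)))
  refine ⟨s + i + 1, by omega, le_StCor' _ _ _ _ _ j (Or.inl ⟨p1, p2, p3, hp⟩) ?_⟩
  intro t' ht' hres
  change n + 1 ≤ sg n α β j (s + i + 1) t'
  change st n α β t' = _ ∨ st n α β t' = _ at hres
  have hphi0 : phi n (st n α β t') = 0 := by
    rcases hres with h | h <;> rw [h] <;> rfl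
  have hgt : t + 1 ≤ t' := by
    by_contra hlt
    rcases hres with h | h
    · obtain ⟨r, rfl⟩ : ∃ r, t' = r + 1 := ⟨t' - 1, by omega⟩
      exact st_ne_start (hnh r (by omega) (by omega)) h
    · exact hnc t' (by omega) (by omega) (by rw [h]; trivial)
  have hone : sg n α β j t (t + 1) = 1 := by
    rw [sg_succ, decide_eq_true]; · rfl
    right
    exact ⟨q1, q2, q3, _, hq, ht4⟩
  have hphin : phi n (st n α β (t + 1)) = n := by rw [hq]; rfl
  rw [sg_split j (show s + i + 1 ≤ t by omega) (show t ≤ t' by omega),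
    sg_split j (show t ≤ t + 1 by omega) hgt, hone]
  rcases Nat.lt_or_ge t' e with h | h
  · have := phi_le (n := n) (β := β) j hgt (fun x h1 h2 => hnh x (by omega) (by omega))
    omega
  · have := phi_le (n := n) (β := β) j hte.le (fun x h1 h2 => hnh x (by omega) (by omega))
    rw [he, hphin] at this
    rw [sg_split j hte.le h]
    simp only [phi] at this
    omega

/-- A round that never ends is infinitely expensive. -/
theorem endless_cost {n : ℕ} (hn : 0 < n) (α : ℕ → AI) (β : ℕ → AO) (s : ℕ)
    (hnh : ∀ t, s ≤ t → (α t).isRight = false)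
    (hnc : ∀ t, s ≤ t → st n α β t ≠ .close 0) (t : ℕ) (ht : s < t) (c : ℕ) :
    (c : ℕ∞) ≤ (DA n).StCor .start (wd α β) t := by
  have hns : ∀ t, s < t → st n α β t ≠ .start := by
    intro t ht
    obtain ⟨r, rfl⟩ : ∃ r, t = r + 1 := ⟨t - 1, by omega⟩
    exact st_ne_start (hnh r (by omega))
  have hw := st_wf (α := α) (β := β) hn t
  rcases hq : st n α β t with _ | c | ⟨q1, q2, q3, b, i⟩
  · exact absurd hq (hns t ht)
  · exact absurd (st_close_down (fun x h1 _ => hnh x (by omega)) hq) (hnc _ (by omega))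
  · rw [hq] at hw
    refine le_StCor' _ _ _ _ _ (⟨i, hw⟩, b) (Or.inl ⟨q1, q2, q3, hq⟩) fun t' ht' hres => ?_
    rcases hres with h | h
    · exact absurd h (hns t' (by omega))
    · exact absurd h (hnc t' (by omega))

theorem part_two {n : ℕ} (hn : 0 < n) (f : ℕ → ℕ) (hf : DelayFn f)
    (hex : ∃ τO, OWinning f (DA n).Lang τO ∧ stratCost (DA n).wCost f τO = (n : ℕ∞)) :
    ∃ i : ℕ, n * (2 ^ 2 ^ n - 1) ≤ ∑ i' ∈ Finset.range (i + 1), (f i' - 1) := by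
  by_contra hcon
  push Not at hcon
  set N := n * (2 ^ 2 ^ n - 1) with hN
  obtain ⟨τ, -, hcost⟩ := hex
  obtain ⟨w, hw1, hw2⟩ := exists_ruler (2 ^ n)
  have hF : ∀ t, ∑ i ∈ Finset.range (t + 1), f i ≤ t + N := by
    intro t
    have h1 : ∑ i ∈ Finset.range (t + 1), f i
        = ∑ i ∈ Finset.range (t + 1), (f i - 1) + (t + 1) := by
      clear hcon hN
      induction t with
      | zero => have := hf 0; simp; omega
      | succ t ih =>
        have := hf (t + 1)
        rw [Finset.sum_range_succ, ih, Finset.sum_range_succ _ (t + 1)]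
        omega
    have := hcon t
    omega
  let B : (ℕ → AI) → ℕ → AO := fun α t =>
    τ ((List.range (∑ i ∈ Finset.range (t + 1), f i)).map α)
  have hB : ∀ α α' t l, (∀ m, m < l → α m = α' m) → t + N ≤ l → B α t = B α' t := by
    intro α α' t l h hl
    simp only [B]
    congr 1
    refine List.map_congr_left fun m hm => h m ?_
    have := hF t
    rw [List.mem_range] at hm
    omega
  let H : ℕ → (ℕ → AI) → AI := fun l α =>
    if l < ls α l + N then .inl ((w ((l - ls α l) / n)).testBit ((l - ls α l) % n))
    else if st n α (B α) (l - N) = .close 0 then .inr true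
    else .inl (!bO (B α (ls α l)))
  obtain ⟨α, hα⟩ := exists_causal H (by
    intro l a a' h
    simp only [H]
    rw [← ls_congr h]
    by_cases hl : l < ls a l + N
    · rw [if_pos hl, if_pos hl]
    · rw [if_neg hl, if_neg hl, hB a a' (ls a l) l h (by omega),
        st_congr (α' := a') (β' := B a') (fun r hr => h r (by omega))
          (fun r hr => hB a a' r l h (by omega))])
  simp only [H] at hα
  -- every tail contains an expensive position
  have key : ∀ T, ∃ t, T ≤ t ∧ ((n + 1 : ℕ) : ℕ∞) ≤ (DA n).StCor .start (wd α (B α)) t := by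
    -- no close 0 in a round without end
    have hend : ∀ T, (∀ t, T ≤ t → (α t).isRight = false) →
        ∃ t, T ≤ t ∧ ((n + 1 : ℕ) : ℕ∞) ≤ (DA n).StCor .start (wd α (B α)) t := by
      intro T hT
      have hls := ls_le α T
      have hnh : ∀ t, ls α T ≤ t → (α t).isRight = false := by
        intro t ht
        rcases Nat.lt_or_ge t T with h | h
        · exact ls_nohash α T t ht h
        · exact hT t h
      refine ⟨T + 1, by omega, endless_cost hn α (B α) (ls α T) hnh ?_ _ (by omega) _⟩
      intro t ht hcl
      have h1 : ls α (t + N) = ls α T := by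
        rcases le_total T (t + N) with h | h
        · exact ls_const α h fun x h1 _ => hT x h1
        · exact ls_mid α (by omega) h
      have h2 := hα (t + N)
      rw [h1, if_neg (by omega), Nat.add_sub_cancel, if_pos hcl] at h2
      have h3 := hnh (t + N) (by omega)
      rw [h2] at h3
      cases h3
    intro T
    by_cases hT : ∀ t, T ≤ t → (α t).isRight = false
    · exact hend T hT
    push Not at hT
    obtain ⟨s0, hs0, hs0'⟩ := hT
    by_cases hT2 : ∀ t, s0 + 1 ≤ t → (α t).isRight = false
    · obtain ⟨t, h1, h2⟩ := hend _ hT2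
      exact ⟨t, by omega, h2⟩
    push Not at hT2
    let l := Nat.find hT2
    obtain ⟨hl1, hl2⟩ := Nat.find_spec hT2
    have hmin : ∀ t, s0 + 1 ≤ t → t < l → (α t).isRight = false := by
      intro t h1 h2
      have := Nat.find_min hT2 h2
      by_contra h3
      exact this ⟨h1, h3⟩
    change s0 + 1 ≤ l at hl1
    change (α l).isRight ≠ false at hl2
    have hs1 : ls α (s0 + 1) = s0 + 1 := by
      rw [ls, if_pos (by simpa using hs0')]
    have hls : ∀ t, s0 + 1 ≤ t → t ≤ l → ls α t = s0 + 1 := by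
      intro t h1 h2
      rw [ls_const α h1 (fun x h3 h4 => hmin x h3 (by omega)), hs1]
    have hst : st n α (B α) (s0 + 1) = .start := by
      have := st_ls n α (B α) (s0 + 1)
      rwa [hs1] at this
    have hl3 := hα l
    rw [hls l hl1 le_rfl] at hl3
    split_ifs at hl3 with c1 c2
    · rw [hl3] at hl2; exact absurd rfl hl2
    · have hlt : s0 + 1 < l - N := by
        rcases Nat.lt_or_ge (s0 + 1) (l - N) with h | h
        · exact h
        · rw [show l - N = s0 + 1 by omega, hst] at c2; cases c2
      obtain ⟨t, h1, h2⟩ := cheat_cost hn α (B α) w hw1 hw2 (s0 + 1) (l - N) hlt hst c2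
        (fun t h1 h2 => hmin t h1 (by omega)) (by
          intro t h1 h2
          have h3 := hα t
          have h4 := hmin t h1 (by omega)
          rw [hls t h1 (by omega)] at h3
          rw [← hN]
          split_ifs at h3 with d1 d2
          · rw [if_pos d1, h3]; rfl
          · rw [h3] at h4; cases h4
          · rw [if_neg d1, h3]; rfl)
      exact ⟨t, by omega, h2⟩
    · rw [hl3] at hl2; exact absurd rfl hl2
  have hlow : ((n + 1 : ℕ) : ℕ∞) ≤ (DA n).wCost (wd α (B α)) := by
    refine Filter.le_limsup_of_frequently_le ?_ (by isBoundedDefault)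
    rw [Filter.frequently_atTop]
    intro T
    obtain ⟨t, h1, h2⟩ := key T
    exact ⟨t, h1, h2⟩
  have hu : ∀ i, (cut α f i).length = f i := by intro i; simp [cut]
  have hup : (DA n).wCost (wd α (B α)) ≤ stratCost (DA n).wCost f τ := by
    refine le_iSup_of_le (cut α f) (le_iSup_of_le (B α) (le_iSup_of_le ⟨hu, fun i => ?_⟩ ?_))
    · simp only [B]; rw [cut_oHist]
    · have : flatWord (cut α f) = α := funext fun m => cut_flatWord _ _ hf m
      rw [this]
      exact le_rfl
  rw [hcost] at hup
  have := hlow.trans hup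
  have h2 : n + 1 ≤ n := by exact_mod_cast this
  omega

/-! ### Finite version -/

abbrev FSt (n : ℕ) := {q : St // q.wf n}

def FSt.code (n : ℕ) (q : FSt n) : Fin 3 × Bool × Bool × Bool × Bool × Fin (n + 1) :=
  match q with
  | ⟨.start, _⟩ => (0, false, false, false, false, 0)
  | ⟨.close c, h⟩ => (1, false, false, false, false, ⟨c, Nat.lt_succ_of_le h⟩)
  | ⟨.run a b c d i, h⟩ => (2, a, b, c, d, ⟨i, Nat.lt_succ_of_lt h⟩)

theorem FSt.code_injective (n : ℕ) : Function.Injective (FSt.code n) := by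
  rintro ⟨_ | c | ⟨a, b, c, d, i⟩, h⟩ ⟨_ | c' | ⟨a', b', c', d', i'⟩, h'⟩ hh <;>
    simp_all [FSt.code]

theorem exists_finite (n : ℕ) (hn : 0 < n) : ∃ m kJ : ℕ,
    ∃ M : StreettCost (Fin m) (AI × AO) (Fin kJ), m + kJ ≤ 48 * (n + 1) + 2 * n ∧
      M.wCost = (DA n).wCost ∧ M.Lang = (DA n).Lang := by
  have : Finite (FSt n) := Finite.of_injective _ (FSt.code_injective n)
  have : Fintype (FSt n) := Fintype.ofFinite _
  have hcard : Fintype.card (FSt n) ≤ 48 * (n + 1) := by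
    refine (Fintype.card_le_of_injective _ (FSt.code_injective n)).trans ?_
    simp only [Fintype.card_prod, Fintype.card_fin, Fintype.card_bool]
    omega
  let e := Fintype.equivFin (FSt n)
  have hJ : Fintype.card (Fin n × Bool) = 2 * n := by
    simp only [Fintype.card_prod, Fintype.card_fin, Fintype.card_bool]; omega
  let eJ : Fin (2 * n) ≃ Fin n × Bool := (Fintype.equivFinOfCardEq hJ).symm
  let h : Fin (Fintype.card (FSt n)) → St := fun k => (e.symm k).1
  let M : StreettCost (Fin (Fintype.card (FSt n))) (AI × AO) (Fin (2 * n)) :=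
    { qI := e ⟨.start, trivial⟩
      δ := fun q a => e ⟨(DA n).δ (h q) a, stp_wf hn _ _ _ (e.symm q).2⟩
      req := fun j => {q | h q ∈ (DA n).req (eJ j)}
      res := fun j => {q | h q ∈ (DA n).res (eJ j)}
      Cst := fun j q a => (DA n).Cst (eJ j) (h q) a }
  have hq : h M.qI = (DA n).qI := by simp [h, M, DA]
  have hcor : ∀ w t, M.StCor M.qI w t = (DA n).StCor (DA n).qI w t := by
    intro w t
    rw [← hq]
    exact StCor_hom M (DA n) h eJ (fun q a => by simp [h, M]) (fun _ _ => Iff.rfl)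
      (fun _ _ => Iff.rfl) (fun _ _ _ => rfl) _ w t
  refine ⟨_, _, M, by omega, ?_, ?_⟩
  · funext w
    simp only [StreettCost.wCost, hcor]
  · ext w
    simp only [StreettCost.Lang, StreettCost.Accepting, Set.mem_ofPred_eq, hcor]

/-- Theorem 9, doubly-exponential lookahead for optimal Streett
strategies. There is a polynomial-size family of Streett automata with costs `A_n` over
`({0,1} ∪ {0,1}×{#}) × ({0,1} ∪ {0,1}×{◄,►})` such that Player O has a winning strategy
of cost `n` for some delay function, but every delay function admitting a winning strategy
of cost `n` eventually grants a lookahead of size `n·(2^(2^n) - 1)`. -/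
theorem statement15 :
    ∃ p : Polynomial ℕ, ∀ n : ℕ, 0 < n →
      ∃ m kJ : ℕ,
        ∃ M : StreettCost (Fin m) ((Bool ⊕ Bool) × (Bool ⊕ (Bool × Bool))) (Fin kJ),
          m + kJ ≤ p.eval n ∧
          (∃ f : ℕ → ℕ, DelayFn f ∧
            ∃ τO, OWinning f M.Lang τO ∧ stratCost M.wCost f τO = (n : ℕ∞)) ∧
          (∀ f : ℕ → ℕ, DelayFn f →
            (∃ τO, OWinning f M.Lang τO ∧ stratCost M.wCost f τO = (n : ℕ∞)) →
            ∃ i : ℕ, n * (2 ^ 2 ^ n - 1) ≤ ∑ i' ∈ Finset.range (i + 1), (f i' - 1)) := by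
  refine ⟨Polynomial.C 48 * (Polynomial.X + 1) + Polynomial.C 2 * Polynomial.X, fun n hn => ?_⟩
  obtain ⟨m, kJ, M, h1, h2, h3⟩ := exists_finite n hn
  refine ⟨m, kJ, M, ?_, ?_, ?_⟩
  · simpa using h1
  · rw [h2, h3]; exact part_one hn
  · intro f hf
    rw [h2, h3]
    exact part_two hn f hf
end
end

section
/- Let A be a parity automaton with costs over Σ_I × Σ_O. If Player O wins the delay-free game Γ_{f_0}(L(A)), then she has a winning strategy τ_O for Γ_{f_0}(L(A)) with Cst_A(τ_O) ≤ 2·|A|, where |A| is the number of states of A. -/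
attribute [local instance] Classical.propDecidable

noncomputable section

/-- A parity automaton with costs `(Q, A, qI, δ, Ω, Cst)`.
`Cst q a = true` means that the transition `(q, a, δ q a)` is an increment-transition,
`Cst q a = false` means it is an `ε`-transition. -/
structure PACost (Q : Type) (A : Type) where
  qI : Q
  δ : Q → A → Q
  Ω : Q → ℕ
  Cst : Q → A → Bool

namespace PACost

variable {Q A : Type}

/-- The state reached after processing the first `n` letters of `w` starting in `q0`. -/
def stateAt (M : PACost Q A) (q0 : Q) (w : ℕ → A) : ℕ → Q
  | 0 => q0
  | n + 1 => M.δ (stateAt M q0 w n) (w n)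

/-- The cost (number of increment-transitions) of the run infix between positions `m` and `n`. -/
def segCost (M : PACost Q A) (q0 : Q) (w : ℕ → A) (m n : ℕ) : ℕ :=
  ((Finset.Ico m n).filter fun j => M.Cst (stateAt M q0 w j) (w j) = true).card

/-- `Ans c`: the set of even colors of `M` that are larger than `c`. -/
def Ans (M : PACost Q A) (c : ℕ) : Set ℕ :=
  { c' | (∃ q, M.Ω q = c') ∧ c < c' ∧ Even c' }

/-- The cost-of-response at position `n` of the run of `M` on `w` starting in `q0`. -/
def Cor (M : PACost Q A) (q0 : Q) (w : ℕ → A) (n : ℕ) : ℕ∞ :=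
  if Even (M.Ω (stateAt M q0 w n)) then 0
  else
    sInf { c : ℕ∞ | ∃ n', n < n' ∧
      M.Ω (stateAt M q0 w n') ∈ M.Ans (M.Ω (stateAt M q0 w n)) ∧
      c = (segCost M q0 w n n' : ℕ∞) }

/-- The run of `M` on `w` starting in `q0` satisfies the parity condition with costs. -/
def Accepting (M : PACost Q A) (q0 : Q) (w : ℕ → A) : Prop :=
  Filter.limsup (fun n => Cor M q0 w n) Filter.atTop < ⊤

/-- The language of `M`. -/
def Lang (M : PACost Q A) : Set (ℕ → A) := { w | Accepting M M.qI w }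

/-- `M` is a finitary Büchi automaton: every transition is an increment-transition and
all colors are `1` or `2`. -/
def FinBuchi (M : PACost Q A) : Prop :=
  (∀ q a, M.Cst q a = true) ∧ ∀ q, M.Ω q = 1 ∨ M.Ω q = 2

end PACost

/-- The finite segment `w m, w (m+1), …, w (n-1)` of an infinite word `w`. -/
def seg {A : Type} (w : ℕ → A) (m n : ℕ) : List A :=
  (List.range (n - m)).map fun i => w (m + i)

/-- The cost `limsup_n Cor(ρ(w), n)` of the run of `M` on an infinite word `w`. -/
def PACost.wCost {Q I O : Type} (M : PACost Q (I × O)) : (ℕ → I × O) → ℕ∞ :=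
  fun w => Filter.limsup (fun n => PACost.Cor M M.qI w n) Filter.atTop

/-- number of increments -/
def cnt (i : ℕ → Bool) (m n : ℕ) : ℕ := ((Finset.Ico m n).filter fun j => i j = true).card

lemma cnt_mono (i : ℕ → Bool) (m : ℕ) {n n' : ℕ} (h : n ≤ n') : cnt i m n ≤ cnt i m n' :=
  Finset.card_le_card (Finset.filter_subset_filter _ (Finset.Ico_subset_Ico_right h))

lemma cnt_succ (i : ℕ → Bool) {m n : ℕ} (h : m ≤ n) :
    cnt i m (n + 1) = cnt i m n + if i n = true then 1 else 0 := by
  unfold cnt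
  rw [← Finset.insert_Ico_right_eq_Ico_add_one h, Finset.filter_insert]
  split_ifs with h1
  · rw [Finset.card_insert_of_notMem (by simp)]
  · rfl

lemma cnt_shift (i : ℕ → Bool) (s m n : ℕ) :
    cnt (fun j => i (s + j)) m n = cnt i (s + m) (s + n) := by
  unfold cnt
  rw [← Finset.map_add_left_Ico, Finset.filter_map, Finset.card_map]
  rfl

/-- eventually bounded cost of response -/
def EvB (c : ℕ → ℕ) (i : ℕ → Bool) (B : ℕ) : Prop :=
  ∃ N, ∀ n, N ≤ n → Odd (c n) → ∃ n', n < n' ∧ Even (c n') ∧ c n < c n' ∧ cnt i n n' ≤ B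

lemma EvB_shift (c : ℕ → ℕ) (i : ℕ → Bool) (B s : ℕ) :
    EvB (fun n => c (s + n)) (fun n => i (s + n)) B ↔ EvB c i B := by
  constructor
  · rintro ⟨N, h⟩
    refine ⟨s + N, fun n hn ho => ?_⟩
    obtain ⟨k, rfl⟩ : ∃ k, n = s + k := ⟨n - s, by omega⟩
    obtain ⟨n', h1, h2, h3, h4⟩ := h k (by omega) ho
    exact ⟨s + n', by omega, h2, h3, by rw [← cnt_shift]; exact h4⟩
  · rintro ⟨N, h⟩
    refine ⟨N, fun n hn ho => ?_⟩
    obtain ⟨n', h1, h2, h3, h4⟩ := h (s + n) (by omega) ho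
    obtain ⟨k, rfl⟩ : ∃ k, n' = s + k := ⟨n' - s, by omega⟩
    exact ⟨k, by omega, h2, h3, by rw [cnt_shift]; exact h4⟩

/-- parity condition -/
def ParOK (p : ℕ → ℕ) : Prop :=
  ∀ c, Odd c → (∃ N, ∀ n, N ≤ n → p n ≤ c) → ¬ (∀ N, ∃ n, N ≤ n ∧ p n = c)

lemma ParOK_shift (p : ℕ → ℕ) (s : ℕ) (h : ParOK p) : ParOK (fun n => p (s + n)) := by
  rintro c hc ⟨N, h1⟩ h2
  refine h c hc ⟨s + N, fun n hn => ?_⟩ fun N => ?_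
  · have := h1 (n - s) (by omega)
    simpa only [show s + (n - s) = n by omega] using this
  · obtain ⟨n, h3, h4⟩ := h2 N
    exact ⟨s + n, by omega, h4⟩

lemma ParOK_unshift (p : ℕ → ℕ) (s : ℕ) (h : ParOK (fun n => p (s + n))) : ParOK p := by
  rintro c hc ⟨N, h1⟩ h2
  refine h c hc ⟨N, fun n hn => h1 _ (by omega)⟩ fun N => ?_
  obtain ⟨n, h3, h4⟩ := h2 (s + N)
  exact ⟨n - s, by omega, by simpa only [show s + (n - s) = n by omega] using h4⟩

lemma exists_limsup (p : ℕ → ℕ) (D : ℕ) (h : ∀ n, p n ≤ D) :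
    ∃ L, (∃ N, ∀ n, N ≤ n → p n ≤ L) ∧ ∀ N, ∃ n, N ≤ n ∧ p n = L := by
  have ex : ∃ L, ∃ N, ∀ n, N ≤ n → p n ≤ L := ⟨D, 0, fun n _ => h n⟩
  refine ⟨Nat.find ex, Nat.find_spec ex, ?_⟩
  by_contra hcon
  push Not at hcon
  obtain ⟨N, hN⟩ := hcon
  obtain ⟨N', hN'⟩ := Nat.find_spec ex
  have hpos : Nat.find ex ≠ 0 := by
    intro h0
    have := hN' (N + N') (by omega)
    have := hN (N + N') (by omega)
    omega
  refine Nat.find_min ex (m := Nat.find ex - 1) (by omega) ⟨N + N', fun n hn => ?_⟩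
  have := hN' n (by omega)
  have := hN n (by omega)
  omega

/-- update of the largest open request -/
def upd (m c : ℕ) : ℕ := if Odd c then max m c else if m < c then 0 else m

lemma upd_mono {m m' : ℕ} (c : ℕ) (h : m ≤ m') : upd m c ≤ upd m' c := by
  unfold upd; split_ifs <;> omega

lemma upd_odd {m c : ℕ} (h : m = 0 ∨ Odd m) : upd m c = 0 ∨ Odd (upd m c) := by
  unfold upd; split_ifs with h1 h2
  · right
    rcases max_choice m c with h3 | h3 <;> rw [h3]
    · rcases h with rfl | h
      · simp at h3; subst h3; exact h1
      · exact h
    · exact h1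
  · simp
  · exact h

lemma le_upd {m c : ℕ} (h : Odd c) : c ≤ upd m c := by
  unfold upd; rw [if_pos h]; omega

lemma upd_le {m c D : ℕ} (h : m ≤ D) (hc : c ≤ D) : upd m c ≤ D := by
  unfold upd; split_ifs <;> omega

lemma upd_ge {m c r : ℕ} (h : r ≤ m) (hc : ¬ (Even c ∧ r < c)) : r ≤ upd m c := by
  unfold upd
  split_ifs with h1 h2
  · omega
  · rw [Nat.not_odd_iff_even] at h1
    exact absurd ⟨h1, by omega⟩ hc
  · exact h

/-- sequence of largest open requests -/
def mseq (c : ℕ → ℕ) : ℕ → ℕ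
  | 0 => upd 0 (c 0)
  | n + 1 => upd (mseq c n) (c (n + 1))

/-- priorities of a play -/
def pri (c : ℕ → ℕ) (i : ℕ → Bool) (n : ℕ) : ℕ :=
  if i n = true then max (c n) (mseq c n) else c n

lemma mseq_odd (c : ℕ → ℕ) (n : ℕ) : mseq c n = 0 ∨ Odd (mseq c n) := by
  induction n with
  | zero => exact upd_odd (Or.inl rfl)
  | succ n ih => exact upd_odd ih

lemma mseq_le (c : ℕ → ℕ) (D : ℕ) (h : ∀ n, c n ≤ D) (n : ℕ) : mseq c n ≤ D := by
  induction n with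
  | zero => exact upd_le (by omega) (h _)
  | succ n ih => exact upd_le ih (h _)

lemma le_mseq (c : ℕ → ℕ) (n : ℕ) (h : Odd (c n)) : c n ≤ mseq c n := by
  cases n <;> exact le_upd h

lemma le_pri (c : ℕ → ℕ) (i : ℕ → Bool) (n : ℕ) : c n ≤ pri c i n := by
  unfold pri; split_ifs <;> omega

lemma pri_le (c : ℕ → ℕ) (i : ℕ → Bool) (D : ℕ) (h : ∀ n, c n ≤ D) (n : ℕ) : pri c i n ≤ D := by
  have := mseq_le c D h n
  have := h n
  unfold pri; split_ifs <;> omega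

lemma pri_odd_le (c : ℕ → ℕ) (i : ℕ → Bool) (n : ℕ) (h : Odd (pri c i n)) :
    pri c i n ≤ mseq c n := by
  have key : ∀ x, Odd x → (x = c n ∨ x = mseq c n) → x ≤ mseq c n := by
    rintro x hx (rfl | rfl)
    · exact le_mseq c n hx
    · exact le_rfl
  apply key _ h
  unfold pri
  split_ifs
  · exact max_choice _ _
  · left; rfl

lemma pri_even_eq (c : ℕ → ℕ) (i : ℕ → Bool) (n : ℕ) (h : Even (pri c i n)) (h0 : 0 < pri c i n) :
    pri c i n = c n := by
  have key : ∀ x, Even x → 0 < x → (x = c n ∨ x = mseq c n) → x = c n := by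
    rintro x hx hx0 (rfl | rfl)
    · rfl
    · rcases mseq_odd c n with h1 | h1
      · omega
      · exact absurd hx (Nat.not_even_iff_odd.2 h1)
  apply key _ h h0
  unfold pri
  split_ifs
  · exact max_choice _ _
  · left; rfl

/-- A positive `mseq` comes from an open request. -/
lemma mseq_open (c : ℕ → ℕ) (n : ℕ) (h : mseq c n ≠ 0) :
    ∃ j ≤ n, c j = mseq c n ∧ ∀ l, j < l → l ≤ n → ¬ (Even (c l) ∧ mseq c n < c l) := by
  induction n with
  | zero =>
    refine ⟨0, le_rfl, ?_, fun l h1 h2 => by omega⟩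
    revert h
    simp only [mseq, upd]
    split_ifs <;> simp
  | succ n ih =>
    by_cases hc : Odd (c (n + 1)) ∧ mseq c n < c (n + 1)
    · refine ⟨n + 1, le_rfl, ?_, fun l h1 h2 => by omega⟩
      simp only [mseq, upd, if_pos hc.1]; omega
    · have he : mseq c (n + 1) = mseq c n := by
        revert h
        simp only [mseq, upd]
        split_ifs with h1 h2
        · intro _
          have : ¬ mseq c n < c (n + 1) := fun h => hc ⟨h1, h⟩
          omega
        · simp
        · simp
      rw [he] at h ⊢
      obtain ⟨j, h1, h2, h3⟩ := ih h
      refine ⟨j, by omega, h2, fun l h4 h5 => ?_⟩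
      rcases Nat.lt_or_ge n l with h6 | h6
      · obtain rfl : l = n + 1 := by omega
        rintro ⟨h7, h8⟩
        have : mseq c (n + 1) = 0 := by
          simp only [mseq, upd]
          rw [if_neg (by rwa [Nat.not_odd_iff_even]), if_pos h8]
        omega
      · exact h3 l h4 h6

/-- Bounded segments plus eventual answers yields the parity condition with `pri`. -/
lemma ParOK_of_bounded (c : ℕ → ℕ) (i : ℕ → Bool) (k B : ℕ) (hE : EvB c i B)
    (hk : ∀ n n', Odd (c n) → (∀ j, n < j → j < n' → ¬ (Even (c j) ∧ c n < c j)) →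
      cnt i n n' ≤ k) : ParOK (pri c i) := by
  rintro d hd ⟨N, hN⟩ hio
  have hcd : ∀ n, N ≤ n → c n ≤ d := fun n hn => (le_pri c i n).trans (hN n hn)
  by_cases hA : ∀ N, ∃ n, N ≤ n ∧ c n = d
  · obtain ⟨N1, h1⟩ := hE
    obtain ⟨n, h2, h3⟩ := hA (N + N1)
    obtain ⟨n', h4, h5, h6, h7⟩ := h1 n (by omega) (h3 ▸ hd)
    have := hcd n' (by omega)
    omega
  · push Not at hA
    obtain ⟨N1, h1⟩ := hA
    have hinc : ∀ n, N + N1 ≤ n → pri c i n = d → i n = true ∧ mseq c n = d := by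
      intro n hn h
      have h2 := h1 n (by omega)
      unfold pri at h
      split_ifs at h with h3
      · refine ⟨h3, ?_⟩
        rcases max_choice (c n) (mseq c n) with h4 | h4
        · omega
        · omega
      · exact absurd h h2
    obtain ⟨n1, h2, h3⟩ := hio (N + N1)
    obtain ⟨-, h4⟩ := hinc n1 h2 h3
    obtain ⟨j, h5, h6, h7⟩ := mseq_open c n1 (by rw [h4]; rintro rfl; simp at hd)
    rw [h4] at h6 h7
    have hun : ∀ l, j < l → ¬ (Even (c l) ∧ d < c l) := by
      intro l hl
      rcases Nat.lt_or_ge n1 l with h8 | h8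
      · rintro ⟨_, h9⟩
        have := hcd l (by omega)
        omega
      · exact h7 l hl h8
    have hgrow : ∀ r, ∃ n', j ≤ n' ∧ r ≤ cnt i j n' := by
      intro r
      induction r with
      | zero => exact ⟨j, le_rfl, by omega⟩
      | succ r ih =>
        obtain ⟨n', h8, h9⟩ := ih
        obtain ⟨n2, h10, h11⟩ := hio (N + N1 + n')
        obtain ⟨h12, -⟩ := hinc n2 (by omega) h11
        refine ⟨n2 + 1, by omega, ?_⟩
        rw [cnt_succ i (by omega), if_pos h12]
        have := cnt_mono i j (show n' ≤ n2 by omega)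
        omega
    obtain ⟨n', h8, h9⟩ := hgrow (k + 1)
    have := hk j n' (h6 ▸ hd) (fun l h10 _ => by rw [h6]; exact hun l h10)
    omega

/-- `x` can reach, after `n` steps, a `d`-edge leading into `B`. -/
def distTo {G : Type} (E : G → ℕ → G → Prop) (d : ℕ) (B : G → Prop) : ℕ → G → Prop
  | 0, x => ∃ y, E x d y ∧ B y
  | n + 1, x => ∃ p y, E x p y ∧ distTo E d B n y

/-- Existence of progress measures. -/
lemma ranks_wf {G : Type} (E : G → ℕ → G → Prop) (d : ℕ) (hd : Odd d)
    (hE : ∀ x p y, E x p y → p ≤ d)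
    (hP : ∀ (x : ℕ → G) (p : ℕ → ℕ), (∀ n, E (x n) (p n) (x (n + 1))) → ParOK p) :
    WellFounded (fun y x : G => ∃ z, Relation.ReflTransGen (fun a b => ∃ p, E a p b) x z ∧ E z d y) := by
  set R := (fun y x : G => ∃ z, Relation.ReflTransGen (fun a b => ∃ p, E a p b) x z ∧ E z d y)
    with hR
  by_contra hcon
  have hbad : ∃ x, ¬ Acc R x := by
    by_contra h
    push Not at h
    exact hcon ⟨h⟩
  let Dd : ℕ → G → Prop := distTo E d (fun y => ¬ Acc R y)
  have hD : ∀ x, ¬ Acc R x → ∃ n, Dd n x := by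
    intro x hx
    have : ∃ y, R y x ∧ ¬ Acc R y := by
      by_contra h
      push Not at h
      exact hx ⟨x, h⟩
    obtain ⟨y, ⟨z, h1, h2⟩, h3⟩ := this
    clear hx
    induction h1 using Relation.ReflTransGen.head_induction_on with
    | refl => exact ⟨0, y, h2, h3⟩
    | head h4 h5 ih =>
      obtain ⟨n, hn⟩ := ih
      obtain ⟨p, hp⟩ := h4
      exact ⟨n + 1, p, _, hp, hn⟩
  have hB : ∀ x, ∃ z : ℕ × G, (∃ n, Dd n x) → E x z.1 z.2 ∧ (∃ n, Dd n z.2) ∧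
      (Dd 0 x → z.1 = d) ∧ (∀ n, Dd (n + 1) x → ¬ Dd 0 x → ∃ m, m ≤ n ∧ Dd m z.2) := by
    intro x
    rcases Classical.em (∃ n, Dd n x) with h | h
    · rcases Classical.em (Dd 0 x) with h0 | h0
      · obtain ⟨y, h1, h2⟩ := h0
        exact ⟨(d, y), fun _ => ⟨h1, hD y h2, fun _ => rfl, fun n _ h => absurd ⟨y, h1, h2⟩ h⟩⟩
      · have hf := Nat.find_spec h
        cases hm : Nat.find h with
        | zero => rw [hm] at hf; exact absurd hf h0
        | succ m =>
          rw [hm] at hf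
          obtain ⟨p, y, h1, h2⟩ := hf
          refine ⟨(p, y), fun _ => ⟨h1, ⟨m, h2⟩, fun h => absurd h h0, fun n hn _ => ⟨m, ?_, h2⟩⟩⟩
          have := Nat.find_min' h hn
          omega
    · exact ⟨(0, x), fun h' => absurd h' h⟩
  choose nx hnx using hB
  obtain ⟨x0, hx0⟩ := hbad
  let xs : ℕ → G := fun n => Nat.rec x0 (fun _ x => (nx x).2) n
  have hxs : ∀ n, ∃ m, Dd m (xs n) := by
    intro n
    induction n with
    | zero => exact hD x0 hx0
    | succ n ih => exact (hnx (xs n) ih).2.1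
  have hpath : ∀ n, E (xs n) (nx (xs n)).1 (xs (n + 1)) := fun n => (hnx (xs n) (hxs n)).1
  refine hP xs (fun n => (nx (xs n)).1) hpath d hd ⟨0, fun n _ => hE _ _ _ (hpath n)⟩ ?_
  intro N
  obtain ⟨m, hm⟩ := hxs N
  induction m using Nat.strong_induction_on generalizing N with
  | _ m ih =>
    rcases Classical.em (Dd 0 (xs N)) with h0 | h0
    · exact ⟨N, le_rfl, (hnx (xs N) (hxs N)).2.2.1 h0⟩
    · cases m with
      | zero => exact absurd hm h0
      | succ m =>
        obtain ⟨m', h1, h2⟩ := (hnx (xs N) (hxs N)).2.2.2 m hm h0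
        obtain ⟨n, h3, h4⟩ := ih m' (by omega) (N + 1) h2
        exact ⟨n, by omega, h4⟩

lemma ranks {G : Type} (d : ℕ) : ∀ (E : G → ℕ → G → Prop)
    (_ : ∀ x p y, E x p y → p ≤ d)
    (_ : ∀ (x : ℕ → G) (p : ℕ → ℕ), (∀ n, E (x n) (p n) (x (n + 1))) → ParOK p),
    ∃ (κ : Type 1) (_ : LinearOrder κ) (_ : WellFoundedLT κ) (_ : Inhabited κ) (ρ : ℕ → G → κ),
      (∀ p p' x y, p' ≤ p → ρ p x < ρ p y → ρ p' x < ρ p' y) ∧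
      ∀ x p y, E x p y → ρ p y ≤ ρ p x ∧ (Odd p → ρ p y < ρ p x) := by
  induction d with
  | zero =>
    intro E hE hP
    refine ⟨ULift ℕ, inferInstance, inferInstance, inferInstance, fun _ _ => default, ?_, ?_⟩
    · intro p p' x y _ h; exact absurd h (lt_irrefl _)
    · intro x p y h
      have := hE x p y h
      obtain rfl : p = 0 := by omega
      exact ⟨le_rfl, fun h => by simp at h⟩
  | succ d ih =>
    intro E hE hP
    rcases Nat.even_or_odd (d + 1) with hd | hd
    · obtain ⟨κ, i1, i2, i3, ρ, h1, h2⟩ := ih (fun x p y => E x p y ∧ p ≤ d) (fun x p y h => h.2)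
        (fun x p h => hP x p fun n => (h n).1)
      refine ⟨κ, i1, i2, i3, fun p x => if p ≤ d then ρ p x else default, ?_, ?_⟩
      · intro p p' x y hp h
        by_cases hpd : p ≤ d
        · simp only [hpd, if_true, show p' ≤ d by omega] at h ⊢
          exact h1 p p' x y hp h
        · simp [hpd] at h
      · intro x p y h
        by_cases hpd : p ≤ d
        · simp only [hpd, if_true]
          exact h2 x p y ⟨h, hpd⟩
        · have := hE x p y h
          obtain rfl : p = d + 1 := by omega
          simp only [hpd, if_false]
          exact ⟨le_rfl, fun h => absurd hd (Nat.not_even_iff_odd.2 h)⟩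
    · have wf := ranks_wf E (d + 1) hd hE hP
      set R := (fun y x : G =>
        ∃ z, Relation.ReflTransGen (fun a b => ∃ p, E a p b) x z ∧ E z (d + 1) y) with hR
      have : IsWellFounded G R := ⟨wf⟩
      let μ : G → Ordinal.{0} := IsWellFounded.rank R
      have hμ1 : ∀ x p y, E x p y → μ y ≤ μ x := by
        intro x p y h
        show IsWellFounded.rank R y ≤ IsWellFounded.rank R x
        rw [IsWellFounded.rank_eq, Ordinal.iSup_le_iff]
        rintro ⟨z, w, hw1, hw2⟩
        rw [Order.succ_le_iff]
        exact IsWellFounded.rank_lt_of_rel ⟨w, Relation.ReflTransGen.head ⟨p, h⟩ hw1, hw2⟩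
      have hμ2 : ∀ x y, E x (d + 1) y → μ y < μ x := fun x y h =>
        IsWellFounded.rank_lt_of_rel ⟨x, Relation.ReflTransGen.refl, h⟩
      obtain ⟨κ, i1, i2, i3, ρ, h1, h2⟩ := ih (fun x p y => E x p y ∧ μ y = μ x)
        (fun x p y h => by
          have := hE x p y h.1
          by_contra hlt
          obtain rfl : p = d + 1 := by omega
          exact absurd h.2 (hμ2 x y h.1).ne)
        (fun x p h => hP x p fun n => (h n).1)
      refine ⟨Ordinal.{0} ×ₗ κ, inferInstance, inferInstance, ⟨toLex (0, default)⟩,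
        fun p x => toLex (μ x, if p ≤ d then ρ p x else default), ?_, ?_⟩
      · intro p p' x y hp h
        rw [Prod.Lex.toLex_lt_toLex] at h ⊢
        rcases h with h | ⟨h, h'⟩
        · exact Or.inl h
        · right
          refine ⟨h, ?_⟩
          by_cases hpd : p ≤ d
          · simp only [hpd, if_true, show p' ≤ d by omega] at h' ⊢
            exact h1 p p' x y hp h'
          · simp [hpd] at h'
      · intro x p y h
        rw [Prod.Lex.toLex_lt_toLex, Prod.Lex.toLex_le_toLex]
        rcases (hμ1 x p y h).lt_or_eq with h3 | h3
        · exact ⟨Or.inl h3, fun _ => Or.inl h3⟩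
        · have hpd : p ≤ d := by
            by_contra hlt
            have := hE x p y h
            obtain rfl : p = d + 1 := by omega
            exact absurd h3 (hμ2 x y h).ne
          simp only [hpd, if_true]
          obtain ⟨h4, h5⟩ := h2 x p y ⟨h, h3⟩
          exact ⟨Or.inr ⟨h3, h4⟩, fun ho => Or.inr ⟨h3, h5 ho⟩⟩

lemma exists_color_bound {Q : Type} [Fintype Q] (Ω : Q → ℕ) : ∃ D, ∀ q, Ω q ≤ D :=
  ⟨Finset.univ.sup Ω, fun q => Finset.le_sup (Finset.mem_univ q)⟩

/-- If all plays of a positional strategy staying in `Y` satisfy the parity condition with `pri`,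
then they have cost at most `|Q|`. -/
lemma EvB_of_parity {Q I O : Type} [Fintype Q] (M : PACost Q (I × O)) (Y : Set Q)
    (σ : Q → I → O)
    (hP : ∀ (q : ℕ → Q) (a : ℕ → I), (∀ n, q n ∈ Y) →
      (∀ n, q (n + 1) = M.δ (q n) (a n, σ (q n) (a n))) →
      ParOK (pri (fun n => M.Ω (q n)) (fun n => M.Cst (q n) (a n, σ (q n) (a n)))))
    (q : ℕ → Q) (a : ℕ → I) (hY : ∀ n, q n ∈ Y)
    (hq : ∀ n, q (n + 1) = M.δ (q n) (a n, σ (q n) (a n))) :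
    EvB (fun n => M.Ω (q n)) (fun n => M.Cst (q n) (a n, σ (q n) (a n))) (Fintype.card Q) := by
  obtain ⟨D, hD⟩ := exists_color_bound M.Ω
  set c : ℕ → ℕ := fun n => M.Ω (q n) with hc
  set i : ℕ → Bool := fun n => M.Cst (q n) (a n, σ (q n) (a n)) with hi
  -- limsup is even
  have hlim : ∀ (q : ℕ → Q) (a : ℕ → I), (∀ n, q n ∈ Y) →
      (∀ n, q (n + 1) = M.δ (q n) (a n, σ (q n) (a n))) →
      ∃ L, Even L ∧ (∃ N, ∀ n, N ≤ n → pri (fun n => M.Ω (q n))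
        (fun n => M.Cst (q n) (a n, σ (q n) (a n))) n ≤ L) ∧
        (0 < L → ∀ N, ∃ n, N ≤ n ∧ M.Ω (q n) = L) := by
    intro q a hY hq
    obtain ⟨L, h1, h2⟩ := exists_limsup (pri (fun n => M.Ω (q n))
        (fun n => M.Cst (q n) (a n, σ (q n) (a n)))) D (pri_le _ _ D (fun n => hD _))
    have hL : Even L := by
      by_contra h
      exact hP q a hY hq L (Nat.not_even_iff_odd.1 h) h1 h2
    refine ⟨L, hL, h1, fun h0 N => ?_⟩
    obtain ⟨n, h3, h4⟩ := h2 N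
    refine ⟨n, h3, ?_⟩
    rw [← h4]
    exact (pri_even_eq _ _ n (h4 ▸ hL) (h4 ▸ h0)).symm
  obtain ⟨L, hL, ⟨N, hN⟩, hio⟩ := hlim q a hY hq
  refine ⟨N, fun n hn hodd => ?_⟩
  have hcL : c n < L := by
    have h1 : c n ≤ L := (le_pri c i n).trans (hN n hn)
    rcases h1.lt_or_eq with h | h
    · exact h
    · rw [h] at hodd; exact absurd hL (Nat.not_even_iff_odd.2 hodd)
  have hex : ∃ n', n < n' ∧ Even (c n') ∧ c n < c n' := by
    obtain ⟨n', h1, h2⟩ := hio (by omega) (n + 1)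
    have h2' : c n' = L := h2
    exact ⟨n', by omega, h2' ▸ hL, by omega⟩
  obtain ⟨h1, h2, h3⟩ := Nat.find_spec hex
  refine ⟨Nat.find hex, h1, h2, h3, ?_⟩
  by_contra hlt
  push Not at hlt
  have hun : ∀ l, n ≤ l → l < Nat.find hex → ¬ (Even (c l) ∧ c n < c l) := by
    rintro l hl1 hl2 ⟨h4, h5⟩
    rcases hl1.lt_or_eq with h | rfl
    · exact Nat.find_min hex hl2 ⟨h, h4, h5⟩
    · omega
  obtain ⟨x, hx, y, hy, hxy, hqxy⟩ := Finset.exists_ne_map_eq_of_card_lt_of_maps_to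
    (s := (Finset.Ico n (Nat.find hex)).filter fun j => i j = true)
    (t := (Finset.univ : Finset Q)) (f := q) hlt (fun _ _ => Finset.mem_univ _)
  -- wlog x < y
  have key : ∃ x y, n ≤ x ∧ x < y ∧ y < Nat.find hex ∧ i x = true ∧ q x = q y := by
    simp only [Finset.mem_filter, Finset.mem_Ico] at hx hy
    rcases lt_or_gt_of_ne hxy with h | h
    · exact ⟨x, y, hx.1.1, h, hy.1.2, hx.2, hqxy⟩
    · exact ⟨y, x, hy.1.1, h, hx.1.2, hy.2, hqxy.symm⟩
  clear hxy hqxy hx hy x y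
  obtain ⟨x, y, hnx, hxy, hy, hix, hqxy⟩ := key
  let φ : ℕ → ℕ := fun k => Nat.rec n (fun _ z => if z + 1 = y then x else z + 1) k
  have hφ0 : φ 0 = n := rfl
  have hφs : ∀ k, φ (k + 1) = if φ k + 1 = y then x else φ k + 1 := fun k => rfl
  clear_value φ
  have hφr : ∀ k, n ≤ φ k ∧ φ k < y := by
    intro k
    induction k with
    | zero => rw [hφ0]; omega
    | succ k ih => rw [hφs]; split_ifs <;> omega
  have hq' : ∀ k, q (φ (k + 1)) = M.δ (q (φ k)) (a (φ k), σ (q (φ k)) (a (φ k))) := by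
    intro k
    rw [← hq, hφs]
    split_ifs with h
    · rw [h, hqxy]
    · rfl
  have hφx : ∀ N, ∃ k, N ≤ k ∧ φ k = x := by
    have aux : ∀ r N, y - φ N ≤ r → ∃ k, N + 1 ≤ k ∧ φ k = x := by
      intro r
      induction r with
      | zero => intro N h; have := hφr N; omega
      | succ r ih =>
        intro N h
        by_cases h1 : φ N + 1 = y
        · exact ⟨N + 1, by omega, by rw [hφs, if_pos h1]⟩
        · have h2 : φ (N + 1) = φ N + 1 := by rw [hφs, if_neg h1]
          obtain ⟨k, h3, h4⟩ := ih (N + 1) (by have := hφr N; omega)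
          exact ⟨k, by omega, h4⟩
    intro N
    obtain ⟨k, h3, h4⟩ := aux _ N le_rfl
    exact ⟨k, by omega, h4⟩
  obtain ⟨L', hL', ⟨N', hN'⟩, hio'⟩ := hlim (fun k => q (φ k)) (fun k => a (φ k))
    (fun k => hY _) hq'
  have hm : ∀ k, c n ≤ mseq (fun k => M.Ω (q (φ k))) k := by
    intro k
    induction k with
    | zero =>
      have := le_mseq (fun k => M.Ω (q (φ k))) 0 (by simp only [hφ0]; exact hodd)
      simp only [hφ0] at this
      exact this
    | succ k ih =>
      exact upd_ge ih (hun _ (hφr _).1 (by have := (hφr (k + 1)).2; omega))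
  have hcL' : c n < L' := by
    obtain ⟨k, h4, h5⟩ := hφx N'
    have h6 := hN' k h4
    unfold pri at h6
    rw [if_pos (by simp only [h5]; exact hix)] at h6
    simp only [] at h6
    have h7 := hm k
    have h8 : c n ≤ L' := by omega
    rcases h8.lt_or_eq with h | h
    · exact h
    · rw [h] at hodd; exact absurd hL' (Nat.not_even_iff_odd.2 hodd)
  obtain ⟨k, -, h5⟩ := hio' (by omega) 0
  have h5' : c (φ k) = L' := h5
  exact hun (φ k) (hφr k).1 (by have := (hφr k).2; omega) ⟨h5' ▸ hL', by omega⟩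

/-- Iterated moves. -/
def pathV {V I : Type} (child : V → I → V) (v : V) (α : ℕ → I) : ℕ → V
  | 0 => v
  | n + 1 => child (pathV child v α n) (α n)

lemma pathV_shift {V I : Type} (child : V → I → V) (v : V) (α : ℕ → I) (s n : ℕ) :
    pathV child v α (s + n) = pathV child (pathV child v α s) (fun j => α (s + j)) n := by
  induction n with
  | zero => rfl
  | succ n ih => rw [← add_assoc]; simp only [pathV, ih]

lemma pathV_congr {V I : Type} (child : V → I → V) (v : V) (α β : ℕ → I) (n : ℕ)
    (h : ∀ j, j < n → α j = β j) : pathV child v α n = pathV child v β n := by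
  induction n with
  | zero => rfl
  | succ n ih => simp only [pathV]; rw [ih fun j hj => h j (by omega), h n (by omega)]

/-- A strategy tree of Player O. -/
structure STree {Q I O : Type} (M : PACost Q (I × O)) (V : Type) where
  child : V → I → V
  out : V → I → O
  st : V → Q
  hst : ∀ v a, st (child v a) = M.δ (st v) (a, out v a)

namespace STree

variable {Q I O V : Type} {M : PACost Q (I × O)}

/-- colors along a branch -/
def col (T : STree M V) (v : V) (α : ℕ → I) (n : ℕ) : ℕ := M.Ω (T.st (pathV T.child v α n))

/-- increments along a branch -/
def inc (T : STree M V) (v : V) (α : ℕ → I) (n : ℕ) : Bool :=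
  M.Cst (T.st (pathV T.child v α n)) (α n, T.out (pathV T.child v α n) (α n))

lemma col_shift (T : STree M V) (v : V) (α : ℕ → I) (s n : ℕ) :
    T.col v α (s + n) = T.col (pathV T.child v α s) (fun j => α (s + j)) n := by
  simp only [col, pathV_shift]

lemma inc_shift (T : STree M V) (v : V) (α : ℕ → I) (s n : ℕ) :
    T.inc v α (s + n) = T.inc (pathV T.child v α s) (fun j => α (s + j)) n := by
  simp only [inc, pathV_shift]

end STree

lemma isClosed_of_finite_dep {I : Type} [TopologicalSpace I] [DiscreteTopology I]
    (P : (ℕ → I) → Prop) (n : ℕ)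
    (h : ∀ α β : ℕ → I, (∀ j, j < n → α j = β j) → P α → P β) : IsClosed {α | P α} := by
  rw [← isOpen_compl_iff, isOpen_iff_forall_mem_open]
  intro α hα
  refine ⟨PiNat.cylinder α n, fun β hβ hP => hα (h β α ?_ hP), PiNat.isOpen_cylinder _ α n,
    PiNat.self_mem_cylinder α n⟩
  intro j hj
  exact hβ j hj

/-- Baire category argument. -/
lemma exists_bounded_node {Q I O V : Type} [Finite I] {M : PACost Q (I × O)} (T : STree M V)
    (v0 : V) (hT : ∀ α, ∃ B, EvB (T.col v0 α) (T.inc v0 α) B) (X : Set Q) (hX : T.st v0 ∉ X) :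
    ∃ t k, T.st t ∉ X ∧ ∀ β, (∀ n, T.st (pathV T.child t β n) ∉ X) →
      (∃ B, EvB (T.col t β) (T.inc t β) B) ∧
      ∀ n n', Odd (T.col t β n) →
        (∀ j, n < j → j < n' → ¬ (Even (T.col t β j) ∧ T.col t β n < T.col t β j)) →
        cnt (T.inc t β) n n' ≤ k := by
  let : TopologicalSpace I := ⊥
  have : DiscreteTopology I := ⟨rfl⟩
  let C : Set (ℕ → I) := {α | ∀ n, T.st (pathV T.child v0 α n) ∉ X}
  have hC : IsClosed C := by
    have : C = ⋂ n, {α | T.st (pathV T.child v0 α n) ∉ X} := by ext; simp [C]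
    rw [this]
    refine isClosed_iInter fun n => isClosed_of_finite_dep _ n fun α β h hα => ?_
    rwa [← pathV_congr T.child v0 α β n h]
  by_cases hne : ∃ β, β ∈ C
  swap
  · refine ⟨v0, 0, hX, fun β hβ => absurd ⟨β, hβ⟩ hne⟩
  have : Nonempty C := by obtain ⟨β, hβ⟩ := hne; exact ⟨⟨β, hβ⟩⟩
  have : CompactSpace C := isCompact_iff_compactSpace.1 hC.isCompact
  let P : ℕ → ℕ → ℕ → ℕ → (ℕ → I) → Prop := fun N K n n' α => N ≤ n → Odd (T.col v0 α n) →
        (∀ j, n < j → j < n' → ¬ (Even (T.col v0 α j) ∧ T.col v0 α n < T.col v0 α j)) →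
        cnt (T.inc v0 α) n n' ≤ K
  let F : ℕ × ℕ → Set (ℕ → I) := fun x => {α | ∀ n n', P x.1 x.2 n n' α}
  have hF : ∀ x, IsClosed (F x) := by
    intro x
    have : F x = ⋂ n, ⋂ n', {α | P x.1 x.2 n n' α} := by ext; simp [F]
    rw [this]
    refine isClosed_iInter fun n => isClosed_iInter fun n' =>
      isClosed_of_finite_dep _ (n + n' + 1) fun α β h hα => ?_
    have hcol : ∀ j, j ≤ n + n' → T.col v0 α j = T.col v0 β j := by
      intro j hj
      unfold STree.col
      rw [pathV_congr T.child v0 α β j fun l hl => h l (by omega)]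
    have hinc : ∀ j, j ≤ n + n' → T.inc v0 α j = T.inc v0 β j := by
      intro j hj
      unfold STree.inc
      rw [pathV_congr T.child v0 α β j fun l hl => h l (by omega), h j (by omega)]
    have hcnt : cnt (T.inc v0 α) n n' = cnt (T.inc v0 β) n n' := by
      unfold cnt
      congr 1
      apply Finset.filter_congr
      intro j hj
      rw [hinc j (by simp at hj; omega)]
    intro h1 h2 h3
    rw [← hcnt]
    refine hα h1 (by rwa [hcol n (by omega)]) fun j hj1 hj2 => ?_
    rw [hcol n (by omega), hcol j (by omega)]
    exact h3 j hj1 hj2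
  have hcov : (⋃ x, (Subtype.val ⁻¹' F x : Set C)) = Set.univ := by
    rw [Set.eq_univ_iff_forall]
    rintro ⟨α, hα⟩
    obtain ⟨B, N, hB⟩ := hT α
    rw [Set.mem_iUnion]
    refine ⟨(N, B), fun n n' h1 h2 h3 => ?_⟩
    obtain ⟨n1, h4, h5, h6, h7⟩ := hB n h1 h2
    have : n' ≤ n1 := by
      by_contra h
      exact h3 n1 h4 (by omega) ⟨h5, h6⟩
    exact (cnt_mono _ _ this).trans h7
  obtain ⟨⟨N, K⟩, ⟨α, hαC⟩, hα⟩ := nonempty_interior_of_iUnion_of_closed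
    (fun x => (hF x).preimage continuous_subtype_val) hcov
  rw [mem_interior] at hα
  obtain ⟨U, hU1, hU2, hU3⟩ := hα
  obtain ⟨U', hU'1, rfl⟩ := isOpen_induced_iff.1 hU2
  obtain ⟨S, ⟨α', n0, rfl⟩, hS1, hS2⟩ :=
    (PiNat.isTopologicalBasis_cylinders (fun _ : ℕ => I)).exists_subset_of_mem_open hU3 hU'1
  set s := n0 + N with hs
  refine ⟨pathV T.child v0 α s, K, hαC s, fun β hβ => ?_⟩
  let γ : ℕ → I := fun j => if j < s then α j else β (j - s)
  have hγ1 : ∀ j, j < s → γ j = α j := fun j hj => if_pos hj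
  have hγ2 : (fun j => γ (s + j)) = β := by
    funext j
    simp [γ]
  have hpath : ∀ n, n ≤ s → pathV T.child v0 γ n = pathV T.child v0 α n := fun n hn =>
    pathV_congr _ _ _ _ _ fun j hj => hγ1 j (by omega)
  have hsh : ∀ n, pathV T.child v0 γ (s + n) = pathV T.child (pathV T.child v0 α s) β n := by
    intro n
    rw [pathV_shift, hγ2, hpath s le_rfl]
  have hcol : (fun n => T.col v0 γ (s + n)) = T.col (pathV T.child v0 α s) β := by
    funext n; rw [STree.col_shift, hγ2, hpath s le_rfl]
  have hinc : (fun n => T.inc v0 γ (s + n)) = T.inc (pathV T.child v0 α s) β := by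
    funext n; rw [STree.inc_shift, hγ2, hpath s le_rfl]
  have hγC : γ ∈ C := by
    intro n
    rcases Nat.lt_or_ge n s with h | h
    · rw [hpath n h.le]; exact hαC n
    · obtain ⟨k, rfl⟩ : ∃ k, n = s + k := ⟨n - s, by omega⟩
      rw [hsh]; exact hβ k
  have hγU : γ ∈ U' := by
    apply hS2
    intro j hj
    rw [hγ1 j (by omega)]
    exact hS1 j hj
  have hγF : γ ∈ F (N, K) := hU1 (show (⟨γ, hγC⟩ : C) ∈ Subtype.val ⁻¹' U' from hγU)
  rw [← hcol, ← hinc]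
  constructor
  · obtain ⟨B, hB⟩ := hT γ
    exact ⟨B, (EvB_shift _ _ B s).2 hB⟩
  · intro n n' h1 h2
    rw [cnt_shift]
    refine hγF (s + n) (s + n') (by simp only []; omega) h1 fun j hj1 hj2 => ?_
    obtain ⟨k, rfl⟩ : ∃ k, j = s + k := ⟨j - s, by omega⟩
    exact h2 k (by omega) (by omega)

namespace STree

variable {Q I O V : Type} {M : PACost Q (I × O)}

/-- moves in the product with the largest open request -/
def child2 (T : STree M V) (x : V × ℕ) (a : I) : V × ℕ :=
  (T.child x.1 a, upd x.2 (M.Ω (T.st (T.child x.1 a))))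

/-- priority of a move in the product -/
def prio (T : STree M V) (x : V × ℕ) (a : I) : ℕ :=
  if M.Cst (T.st x.1) (a, T.out x.1 a) = true then max (M.Ω (T.st x.1)) x.2 else M.Ω (T.st x.1)

lemma path2_eq (T : STree M V) (t : V) (β : ℕ → I) (n : ℕ) :
    pathV T.child2 (t, upd 0 (M.Ω (T.st t))) β n =
      (pathV T.child t β n, mseq (T.col t β) n) := by
  induction n with
  | zero => rfl
  | succ n ih => simp only [pathV, ih]; rfl

/-- nodes of the product reachable from `t` while avoiding `X` -/
inductive Reach (T : STree M V) (X : Set Q) (t : V) : V × ℕ → Prop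
  | base : Reach T X t (t, upd 0 (M.Ω (T.st t)))
  | step (x : V × ℕ) (a : I) (h : Reach T X t x) (hX : T.st (T.child x.1 a) ∉ X) :
      Reach T X t (T.child2 x a)

lemma Reach_parity (T : STree M V) (X : Set Q) (t : V) (ht : T.st t ∉ X)
    (hbase : ∀ β, (∀ n, T.st (pathV T.child t β n) ∉ X) → ParOK (pri (T.col t β) (T.inc t β)))
    (x : V × ℕ) (hx : Reach T X t x) :
    T.st x.1 ∉ X ∧ ∀ β, (∀ n, T.st (pathV T.child2 x β n).1 ∉ X) →
      ParOK (fun n => T.prio (pathV T.child2 x β n) (β n)) := by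
  induction hx with
  | base =>
    refine ⟨ht, fun β hβ => ?_⟩
    simp only [path2_eq] at hβ ⊢
    exact hbase β hβ
  | step x a h hX ih =>
    refine ⟨hX, fun β hβ => ?_⟩
    let γ : ℕ → I := fun n => Nat.casesOn n a β
    have h1 : ∀ n, pathV T.child2 x γ (1 + n) = pathV T.child2 (T.child2 x a) β n := by
      intro n
      rw [pathV_shift]
      have : (fun j => γ (1 + j)) = β := by
        funext j
        rw [add_comm]
      rw [this]
      rfl
    have h2 := ih.2 γ (by
      intro n
      cases n with
      | zero => exact ih.1
      | succ n => rw [add_comm, h1]; exact hβ n)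
    have h3 := ParOK_shift _ 1 h2
    have h4 : ∀ n, γ (1 + n) = β n := fun n => by rw [add_comm]
    simp only [h1, h4] at h3
    exact h3

lemma Reach_m (T : STree M V) (X : Set Q) (t : V) (D : ℕ) (hD : ∀ q, M.Ω q ≤ D)
    (x : V × ℕ) (hx : Reach T X t x) :
    x.2 ≤ D ∧ (x.2 = 0 ∨ Odd x.2) ∧ upd 0 (M.Ω (T.st x.1)) ≤ x.2 := by
  induction hx with
  | base => exact ⟨upd_le (by omega) (hD _), upd_odd (Or.inl rfl), le_rfl⟩
  | step x a h hX ih =>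
    exact ⟨upd_le ih.1 (hD _), upd_odd ih.2.1, upd_mono _ (Nat.zero_le _)⟩

lemma extend [Fintype Q] (T : STree M V) (X : Set Q) (t : V) (ht : T.st t ∉ X)
    (hbase : ∀ β, (∀ n, T.st (pathV T.child t β n) ∉ X) → ParOK (pri (T.col t β) (T.inc t β))) :
    ∃ (Y : Set Q) (σ : Q → I → O), T.st t ∈ Y ∧ (∀ q ∈ Y, q ∉ X) ∧
      (∀ q ∈ Y, ∀ a, M.δ q (a, σ q a) ∈ X ∨ M.δ q (a, σ q a) ∈ Y) ∧
      ∀ (q : ℕ → Q) (a : ℕ → I), (∀ n, q n ∈ Y) →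
        (∀ n, q (n + 1) = M.δ (q n) (a n, σ (q n) (a n))) →
        ParOK (pri (fun n => M.Ω (q n)) (fun n => M.Cst (q n) (a n, σ (q n) (a n)))) := by
  obtain ⟨D, hD⟩ := exists_color_bound M.Ω
  have hRm := T.Reach_m X t D hD
  have hRp := T.Reach_parity X t ht hbase
  -- progress measure
  obtain ⟨κ, _, _, _, ρ, hρ1, hρ2⟩ := ranks (G := {x // Reach T X t x}) D
    (fun x p y => ∃ a, y.1 = T.child2 x.1 a ∧ p = T.prio x.1 a)
    (by
      rintro ⟨x, hx⟩ p ⟨y, hy⟩ ⟨a, -, rfl⟩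
      have := (hRm x hx).1
      have := hD (T.st x.1)
      unfold prio
      split_ifs
      · simp only []; omega
      · exact this)
    (by
      intro x p h
      choose a h1 h2 using h
      have hpath : ∀ n, (x n).1 = pathV T.child2 (x 0).1 a n := by
        intro n
        induction n with
        | zero => rfl
        | succ n ih => rw [h1, ih]; rfl
      have := (hRp (x 0).1 (x 0).2).2 a (fun n => by
        rw [← hpath]; exact (hRp _ (x n).2).1)
      simp only [← hpath, ← h2] at this
      exact this)
  let Y : Set Q := {q | ∃ x, Reach T X t x ∧ T.st x.1 = q}
  have hch : ∀ q : Q, ∃ x : V × ℕ, q ∈ Y → ∃ hx : Reach T X t x, T.st x.1 = q ∧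
      ∀ y (hy : Reach T X t y), T.st y.1 = q → y.2 ≤ x.2 ∧
        (y.2 = x.2 → ρ 0 ⟨x, hx⟩ ≤ ρ 0 ⟨y, hy⟩) := by
    intro q
    by_cases hq : q ∈ Y
    swap
    · exact ⟨(t, 0), fun h => absurd h hq⟩
    have h1 : ∃ r, ∃ x, Reach T X t x ∧ T.st x.1 = q ∧ D - x.2 = r := by
      obtain ⟨x, hx, h⟩ := hq
      exact ⟨_, x, hx, h, rfl⟩
    obtain ⟨x0, hx0, hq0, hr0⟩ := Nat.find_spec h1
    let S : Set {x // Reach T X t x} := {x | T.st x.1.1 = q ∧ x.1.2 = x0.2}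
    have hS : S.Nonempty := ⟨⟨x0, hx0⟩, hq0, rfl⟩
    have wf : WellFounded (fun a b : κ => a < b) := wellFounded_lt
    have wf' : WellFounded (fun a b : {x // Reach T X t x} => ρ 0 a < ρ 0 b) :=
      InvImage.wf (ρ 0) wf
    obtain ⟨⟨x, hx⟩, ⟨h2, h3⟩, h4⟩ := wf'.has_min S hS
    refine ⟨x, fun _ => ⟨hx, h2, fun y hy hyq => ⟨?_, fun he => ?_⟩⟩⟩
    · have h5 := Nat.find_min' h1 ⟨y, hy, hyq, rfl⟩
      have := (hRm y hy).1
      have := (hRm x0 hx0).1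
      simp only [] at h3
      omega
    · exact not_lt.1 (h4 ⟨y, hy⟩ ⟨hyq, by simp only [] at h3 ⊢; omega⟩)
  choose xq hxq using hch
  refine ⟨Y, fun q a => T.out (xq q).1 a, ⟨_, Reach.base, rfl⟩, ?_, ?_, ?_⟩
  · rintro q ⟨x, hx, rfl⟩
    exact (hRp x hx).1
  · intro q hq a
    obtain ⟨hx, h1, -⟩ := hxq q hq
    by_cases h : M.δ q (a, T.out (xq q).1 a) ∈ X
    · exact Or.inl h
    · right
      have h2 : T.st (T.child (xq q).1 a) = M.δ q (a, T.out (xq q).1 a) := by rw [T.hst, h1]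
      exact ⟨T.child2 (xq q) a, Reach.step _ a hx (by rwa [h2]), h2⟩
  · intro q a hY hq
    have hxex : ∃ x : ℕ → V × ℕ, ∀ n, x n = xq (q n) := ⟨_, fun n => rfl⟩
    obtain ⟨x, hxdef⟩ := hxex
    have hxq' := fun n => hxq (q n) (hY n)
    simp only [← hxdef] at hxq' hq ⊢
    choose hx hxst hxmin using hxq'
    set c : ℕ → ℕ := fun n => M.Ω (q n) with hc
    set i : ℕ → Bool := fun n => M.Cst (q n) (a n, T.out (x n).1 (a n)) with hi
    have hst : ∀ n, T.st (T.child (x n).1 (a n)) = q (n + 1) := by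
      intro n
      rw [T.hst, hq, hxst]
    have hy : ∀ n, Reach T X t (T.child2 (x n) (a n)) := fun n =>
      Reach.step _ _ (hx n) (by rw [hst, ← hxst]; exact (hRp _ (hx (n + 1))).1)
    have hym : ∀ n, (T.child2 (x n) (a n)).2 = upd (x n).2 (c (n + 1)) := by
      intro n
      simp only [child2, hst, hc]
    have hup : ∀ n, upd (x n).2 (c (n + 1)) ≤ (x (n + 1)).2 := by
      intro n
      rw [← hym]
      exact (hxmin (n + 1) _ (hy n) (hst n)).1
    have hmle : ∀ n, mseq c n ≤ (x n).2 := by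
      intro n
      induction n with
      | zero =>
        have := (hRm _ (hx 0)).2.2
        rw [hxst] at this
        exact this
      | succ n ih => exact (upd_mono _ ih).trans (hup n)
    rintro d hd ⟨N, hN⟩ hio
    obtain ⟨m, ⟨N1, hm1⟩, hm2⟩ := exists_limsup (fun n => (x n).2) D fun n => (hRm _ (hx n)).1
    have hdm : d ≤ m := by
      obtain ⟨n, h1, h2⟩ := hio N1
      have h3 := pri_odd_le c i n (h2 ▸ hd)
      have := hmle n
      have := hm1 n h1
      omega
    -- no answers of `m` after `N`
    have hnoans : ∀ n, N ≤ n → ¬ (Even (c n) ∧ m < c n) := by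
      rintro n hn ⟨-, h⟩
      have := le_pri c i n
      have := hN n hn
      omega
    obtain ⟨n0, hn0, hn0m⟩ := hm2 (N + N1)
    have hconst : ∀ k, (x (n0 + k)).2 = m := by
      intro k
      induction k with
      | zero => exact hn0m
      | succ k ih =>
        have h1 := hup (n0 + k)
        rw [ih] at h1
        have h2 := upd_ge (le_refl m) (hnoans (n0 + k + 1) (by omega))
        have h3 := hm1 (n0 + k + 1) (by omega)
        simp only [← add_assoc] at h3 ⊢
        omega
    -- ranks decrease
    let z : ℕ → {x // Reach T X t x} := fun k => ⟨x (n0 + k), hx _⟩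
    let p : ℕ → ℕ := fun k => T.prio (x (n0 + k)) (a (n0 + k))
    have hz : ∀ k, ρ (p k) (z (k + 1)) ≤ ρ (p k) ⟨_, hy (n0 + k)⟩ ∧
        ∀ r, ρ r (z (k + 1)) ≤ ρ r ⟨_, hy (n0 + k)⟩ := by
      intro k
      have h0 : ρ 0 (z (k + 1)) ≤ ρ 0 ⟨_, hy (n0 + k)⟩ := by
        refine (hxmin (n0 + k + 1) _ (hy (n0 + k)) (hst _)).2 ?_
        have h1 := hup (n0 + k)
        have h2 := upd_ge (le_refl m) (hnoans (n0 + k + 1) (by omega))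
        have h3 := hconst k
        have h4 := hconst (k + 1)
        rw [hym]
        simp only [← add_assoc] at h4
        rw [h3] at h1 ⊢
        omega
      have h1 : ∀ r, ρ r (z (k + 1)) ≤ ρ r ⟨_, hy (n0 + k)⟩ := by
        intro r
        by_contra hlt
        rw [not_le] at hlt
        exact absurd (hρ1 r 0 _ _ (Nat.zero_le _) hlt) (not_lt.2 h0)
      exact ⟨h1 _, h1⟩
    have hpi : ∀ k, p k = if i (n0 + k) = true then max (c (n0 + k)) m else c (n0 + k) := by
      intro k
      simp only [p, prio, hxst, hconst, i, c]
    obtain ⟨L, ⟨N2, hL1⟩, hL2⟩ := exists_limsup p D (by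
      intro k
      have h1 := hconst k
      have h2 := (hRm _ (hx (n0 + k))).1
      have h3 : c (n0 + k) ≤ D := hD _
      rw [hpi]
      split_ifs
      · omega
      · omega)
    rcases Nat.even_or_odd L with hLe | hLo
    · -- L even
      have hdL : d < L := by
        obtain ⟨n, h1, h2⟩ := hio (n0 + N2)
        obtain ⟨k, rfl⟩ : ∃ k, n = n0 + k := ⟨n - n0, by omega⟩
        have h3 := hL1 k (by omega)
        have h4 := hmle (n0 + k)
        rw [hconst] at h4
        have h5 : d ≤ p k := by
          rw [hpi, ← h2]
          unfold pri
          split_ifs <;> omega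
        have h6 : d ≠ L := by
          rintro rfl
          exact absurd hLe (Nat.not_even_iff_odd.2 hd)
        omega
      obtain ⟨k, h1, h2⟩ := hL2 0
      have h3 : L = c (n0 + k) ∨ L = m := by
        rw [← h2, hpi]
        split_ifs
        · exact max_choice _ _
        · left; rfl
      rcases h3 with h3 | h3
      · have := le_pri c i (n0 + k)
        have := hN (n0 + k) (by omega)
        omega
      · have h4 := (hRm _ (hx (n0 + k))).2.1
        have h5 := hconst k
        rw [h5, ← h3] at h4
        rcases h4 with h4 | h4
        · omega
        · exact absurd hLe (Nat.not_even_iff_odd.2 h4)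
    · -- L odd
      have hstep : ∀ k, N2 ≤ k → ρ L (z (k + 1)) ≤ ρ L (z k) ∧
          (p k = L → ρ L (z (k + 1)) < ρ L (z k)) := by
        intro k hk
        have h1 := hρ2 (z k) (p k) ⟨_, hy (n0 + k)⟩ ⟨a (n0 + k), rfl, rfl⟩
        have h2 := (hz k).2 L
        constructor
        · refine h2.trans ?_
          by_contra hlt
          rw [not_le] at hlt
          exact absurd (hρ1 L (p k) _ _ (hL1 k hk) hlt) (not_lt.2 h1.1)
        · intro he
          rw [he] at h1
          exact h2.trans_lt (h1.2 hLo)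
      have hmono : ∀ k l, N2 ≤ k → k ≤ l → ρ L (z l) ≤ ρ L (z k) := by
        intro k l hk hl
        induction l, hl using Nat.le_induction with
        | base => exact le_rfl
        | succ l hl ih => exact (hstep l (by omega)).1.trans ih
      have wf : WellFounded (fun a b : κ => a < b) := wellFounded_lt
      obtain ⟨w, ⟨k, hk, rfl⟩, h2⟩ := wf.has_min {w | ∃ k, N2 ≤ k ∧ w = ρ L (z k)}
        ⟨_, N2, le_rfl, rfl⟩
      obtain ⟨l, hl1, hl2⟩ := hL2 k
      refine h2 (ρ L (z (l + 1))) ⟨l + 1, by omega, rfl⟩ ?_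
      exact ((hstep l (by omega)).2 hl2).trans_le (hmono k l hk hl1)

end STree

/-- `X` is solved by a positional strategy. -/
def Solved {Q I O : Type} [Fintype Q] (M : PACost Q (I × O)) (X : Set Q) : Prop :=
  ∃ σ : Q → I → O, (∀ q ∈ X, ∀ a, M.δ q (a, σ q a) ∈ X) ∧
    ∀ (q : ℕ → Q) (a : ℕ → I), q 0 ∈ X → (∀ n, q (n + 1) = M.δ (q n) (a n, σ (q n) (a n))) →
      EvB (fun n => M.Ω (q n)) (fun n => M.Cst (q n) (a n, σ (q n) (a n))) (Fintype.card Q)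

lemma solved_extend {Q I O V : Type} [Fintype Q] [Finite I] {M : PACost Q (I × O)}
    (T : STree M V) (v0 : V) (hT : ∀ α, ∃ B, EvB (T.col v0 α) (T.inc v0 α) B) (X : Set Q)
    (hX : T.st v0 ∉ X) (hS : Solved M X) : ∃ X', X ⊂ X' ∧ Solved M X' := by
  obtain ⟨t, k, ht, hk⟩ := exists_bounded_node T v0 hT X hX
  obtain ⟨Y, σY, htY, hYX, hYcl, hYP⟩ := T.extend X t ht (fun β hβ => by
    obtain ⟨⟨B, hB⟩, h⟩ := hk β hβ
    exact ParOK_of_bounded _ _ k B hB h)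
  have hYE := EvB_of_parity M Y σY hYP
  obtain ⟨σX, hXcl, hXE⟩ := hS
  refine ⟨X ∪ Y, ?_, ?_⟩
  · rw [Set.ssubset_iff_of_subset Set.subset_union_left]
    exact ⟨T.st t, Or.inr htY, ht⟩
  let σ : Q → I → O := fun q => if q ∈ X then σX q else σY q
  have hσX : ∀ q, q ∈ X → σ q = σX q := fun q hq => if_pos hq
  have hσY : ∀ q, q ∈ Y → σ q = σY q := fun q hq => if_neg (hYX q hq)
  have hcl : ∀ q ∈ X ∪ Y, ∀ a, M.δ q (a, σ q a) ∈ X ∪ Y := by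
    rintro q (hq | hq) a
    · rw [hσX q hq]; exact Or.inl (hXcl q hq a)
    · rw [hσY q hq]; exact hYcl q hq a
  refine ⟨σ, hcl, fun q a h0 hq => ?_⟩
  have hmem : ∀ n, q n ∈ X ∪ Y := by
    intro n
    induction n with
    | zero => exact h0
    | succ n ih => rw [hq]; exact hcl _ ih _
  by_cases h : ∃ s, q s ∈ X
  · obtain ⟨s, hs⟩ := h
    have hall : ∀ n, q (s + n) ∈ X := by
      intro n
      induction n with
      | zero => exact hs
      | succ n ih => rw [← add_assoc, hq, hσX _ ih]; exact hXcl _ ih _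
    rw [← EvB_shift _ _ _ s]
    have := hXE (fun n => q (s + n)) (fun n => a (s + n)) hs (fun n => by
      simp only [← add_assoc]
      rw [hq, hσX _ (hall n)])
    have he : ∀ n, σ (q (s + n)) = σX (q (s + n)) := fun n => hσX _ (hall n)
    simp only [he]
    exact this
  · push Not at h
    have hall : ∀ n, q n ∈ Y := fun n => (hmem n).resolve_left (h n)
    have he : ∀ n, σ (q n) = σY (q n) := fun n => hσY _ (hall n)
    simp only [he] at hq ⊢
    exact hYE q a hall hq

lemma solved_init {Q I O V : Type} [Fintype Q] [Finite I] [Nonempty O] {M : PACost Q (I × O)}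
    (T : STree M V) (v0 : V) (hT : ∀ α, ∃ B, EvB (T.col v0 α) (T.inc v0 α) B) :
    ∃ X, T.st v0 ∈ X ∧ Solved M X := by
  by_contra hcon
  push Not at hcon
  have hemp : Solved M (∅ : Set Q) := by
    obtain ⟨o⟩ := ‹Nonempty O›
    exact ⟨fun _ _ => o, fun q hq => absurd hq (Set.notMem_empty q),
      fun q a h => absurd h (Set.notMem_empty _)⟩
  have wf : WellFounded (fun a b : Set Q => a > b) := wellFounded_gt
  obtain ⟨X, hX, hmax⟩ := wf.has_min {X | Solved M X} ⟨∅, hemp⟩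
  obtain ⟨X', h1, h2⟩ := solved_extend T v0 hT X (fun h => hcon X h hX) hX
  exact hmax X' h2 h1

lemma EvB_of_limsup {Q A : Type} (M : PACost Q A) (q0 : Q) (w : ℕ → A)
    (h : Filter.limsup (fun n => PACost.Cor M q0 w n) Filter.atTop < ⊤) :
    ∃ B, EvB (fun n => M.Ω (M.stateAt q0 w n)) (fun n => M.Cst (M.stateAt q0 w n) (w n)) B := by
  obtain ⟨B, hB⟩ := ENat.ne_top_iff_exists.1 h.ne
  have h1 : Filter.limsup (fun n => PACost.Cor M q0 w n) Filter.atTop < ((B + 1 : ℕ) : ℕ∞) := by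
    rw [← hB]; exact_mod_cast Nat.lt_succ_self B
  have h2 := Filter.eventually_lt_of_limsup_lt h1
  obtain ⟨N, hN⟩ := Filter.eventually_atTop.1 h2
  refine ⟨B + 1, N, fun n hn ho => ?_⟩
  have h3 := hN n hn
  unfold PACost.Cor at h3
  rw [if_neg (Nat.not_even_iff_odd.2 ho), sInf_lt_iff] at h3
  obtain ⟨c, ⟨n', h4, ⟨-, h5, h6⟩, rfl⟩, h7⟩ := h3
  refine ⟨n', h4, h6, h5, ?_⟩
  have : M.segCost q0 w n n' < B + 1 := by exact_mod_cast h7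
  exact this.le

lemma limsup_le_of_EvB {Q A : Type} (M : PACost Q A) (q0 : Q) (w : ℕ → A) (B : ℕ)
    (h : EvB (fun n => M.Ω (M.stateAt q0 w n)) (fun n => M.Cst (M.stateAt q0 w n) (w n)) B) :
    Filter.limsup (fun n => PACost.Cor M q0 w n) Filter.atTop ≤ (B : ℕ∞) := by
  obtain ⟨N, hN⟩ := h
  refine Filter.limsup_le_of_le (h := Filter.eventually_atTop.2 ⟨N, fun n hn => ?_⟩)
  unfold PACost.Cor
  split_ifs with he
  · exact zero_le
  · obtain ⟨n', h1, h2, h3, h4⟩ := hN n hn (Nat.not_even_iff_odd.1 he)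
    have h5 : ((M.segCost q0 w n n' : ℕ) : ℕ∞) ≤ (B : ℕ∞) := by exact_mod_cast h4
    refine le_trans (sInf_le ?_) h5
    exact ⟨n', h1, ⟨⟨_, rfl⟩, h3, h2⟩, rfl⟩

lemma flatten_single {I : Type} (α : ℕ → I) (n : ℕ) :
    ((List.range n).map fun i => [α i]).flatten = (List.range n).map α := by
  induction n with
  | zero => rfl
  | succ n ih => simp [List.range_succ, ih]

lemma flatWord_single {I : Type} [Inhabited I] (α : ℕ → I) (n : ℕ) :
    flatWord (fun i => [α i]) n = α n := by
  unfold flatWord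
  rw [flatten_single]
  simp [List.getD]

/-- The tree of plays consistent with a strategy. -/
def treeOf {Q I O : Type} (M : PACost Q (I × O)) (τ : List I → O) : STree M (List I × Q) where
  child x a := (x.1 ++ [a], M.δ x.2 (a, τ (x.1 ++ [a])))
  out x a := τ (x.1 ++ [a])
  st x := x.2
  hst _ _ := rfl

lemma treeOf_path {Q I O : Type} (M : PACost Q (I × O)) (τ : List I → O) (α : ℕ → I) (n : ℕ) :
    pathV (treeOf M τ).child ([], M.qI) α n = ((List.range n).map α,
      M.stateAt M.qI (fun n => (α n, τ ((List.range (n + 1)).map α))) n) := by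
  induction n with
  | zero => rfl
  | succ n ih =>
    simp only [pathV, ih]
    simp [treeOf, PACost.stateAt, List.range_succ]

/-- cost bound in the delay-free game. If Player O wins the delay-free
game `Γ_{f_0}(L(A))`, then she has a winning strategy of cost at most `2·|A|`. -/
theorem statement19 {Q I O : Type} [Fintype Q] [Fintype I] [Fintype O] [Inhabited I]
    (M : PACost Q (I × O)) (h : OWins (constDF 0) M.Lang) :
    ∃ τO : List I → O, OWinning (constDF 0) M.Lang τO ∧
      stratCost M.wCost (constDF 0) τO ≤ ((2 * Fintype.card Q : ℕ) : ℕ∞) := by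
  obtain ⟨τ, hτ⟩ := h
  have hO : Nonempty O := ⟨τ []⟩
  have hT : ∀ α, ∃ B, EvB ((treeOf M τ).col ([], M.qI) α) ((treeOf M τ).inc ([], M.qI) α) B := by
    intro α
    have h1 := hτ (fun i => [α i]) (fun i => τ ((List.range (i + 1)).map α))
      (fun i => by simp [constDF])
      (fun i => by unfold oHist; rw [flatten_single])
    simp only [flatWord_single] at h1
    obtain ⟨B, hB⟩ := EvB_of_limsup M M.qI _ h1
    refine ⟨B, ?_⟩
    have e1 : (treeOf M τ).col ([], M.qI) α = fun n => M.Ω (M.stateAt M.qI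
        (fun n => (α n, τ ((List.range (n + 1)).map α))) n) := by
      funext n
      simp only [STree.col, treeOf_path]
      rfl
    have e2 : (treeOf M τ).inc ([], M.qI) α = fun n => M.Cst (M.stateAt M.qI
        (fun n => (α n, τ ((List.range (n + 1)).map α))) n)
        (α n, τ ((List.range (n + 1)).map α)) := by
      funext n
      simp only [STree.inc, treeOf_path]
      simp [treeOf, List.range_succ]
    rw [e1, e2]
    exact hB
  obtain ⟨X, hX, σ, hcl, hσ⟩ := solved_init (treeOf M τ) ([], M.qI) hT
  let stf : List I → Q := List.foldl (fun q a => M.δ q (a, σ q a)) M.qI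
  let τ' : List I → O := fun l => σ (stf l.dropLast) (l.getLastD default)
  have main : ∀ (u : ℕ → List I) (v : ℕ → O), (∀ i, (u i).length = constDF 0 i) →
      (∀ i, v i = τ' (oHist u i)) →
      M.wCost (fun n => (flatWord u n, v n)) ≤ (Fintype.card Q : ℕ∞) := by
    intro u v hu hv
    have hu' : ∀ i, ∃ a, u i = [a] := by
      intro i
      rw [← List.length_eq_one_iff, hu]
      simp [constDF]
    choose α hα using hu'
    obtain rfl : u = fun i => [α i] := funext hα
    simp only [flatWord_single]
    have hv' : ∀ n, v n = σ (stf ((List.range n).map α)) (α n) := by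
      intro n
      rw [hv]
      unfold oHist
      rw [flatten_single]
      simp [τ', List.range_succ]
    have hst : ∀ n, M.stateAt M.qI (fun n => (α n, v n)) n = stf ((List.range n).map α) := by
      intro n
      induction n with
      | zero => rfl
      | succ n ih =>
        simp only [PACost.stateAt]
        rw [ih, hv']
        simp [stf, List.range_succ]
    apply limsup_le_of_EvB
    have := hσ (fun n => stf ((List.range n).map α)) α hX (fun n => by
      simp [stf, List.range_succ])
    simp only [hst]
    simp only [hv']
    exact this
  refine ⟨τ', fun u v hu hv => ?_, ?_⟩
  · exact lt_of_le_of_lt (main u v hu hv) (ENat.natCast_lt_top _)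
  · unfold stratCost
    refine iSup_le fun u => iSup_le fun v => iSup_le fun h => (main u v h.1 h.2).trans ?_
    exact_mod_cast (by omega : Fintype.card Q ≤ 2 * Fintype.card Q)
end
end
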